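/- Let σ ≥ 0 and let ν be a σ-finite Borel measure on ℝ concentrated on (−∞,0) with ∫_{(−∞,0)} min(z², |z|) ν(dz) < ∞, whose tail ν̄(x) := ν((−∞,−x]) is regularly varying at infinity with index −α for some α ∈ (1,2), and suppose liminf_{x ↓ 0} x^{β−2} ∫_{(−x,0)} z² ν(dz) > 0 for some β with α ≤ β < 2. For λ ∈ ℝ define Ψ(iλ) := −σ²λ²/2 + ∫_{(−∞,0)} (e^{iλz} − 1 − iλz) ν(dz), and let g : (0,∞) → (0,∞) be regularly varying at infinity with index 1/α with x·ν̄(g(x)) → 1 as x → ∞. Then for every b ∈ ℝ: (i) for all sufficiently large t, the function λ ↦ exp(tΨ(iλ)) is absolutely integrable on ℝ, so p(t,b) := (1/(2π)) ∫_ℝ e^{−ibλ} exp(tΨ(iλ)) dλ is well defined; and (ii) lim_{t → ∞} g(t) · p(t,b) = (Γ(1+1/α)/π) · ((α−1)/Γ(2−α))^{1/α} · sin(π/α). -/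

import Mathlib

open Filter MeasureTheory Set

/-- The characteristic exponent `Ψ(iλ)` of a spectrally negative Lévy process with
drift `m = 0`, Gaussian coefficient `σ` and Lévy measure `ν`. -/
noncomputable def charExponent (σ : ℝ) (ν : MeasureTheory.Measure ℝ) (lam : ℝ) : ℂ :=
  ((-(σ ^ 2 * lam ^ 2) / 2 : ℝ) : ℂ) +
    ∫ z in Iio (0 : ℝ),
      (Complex.exp (Complex.I * lam * z) - 1 - Complex.I * lam * z) ∂ν

/-- The Fourier-inversion density of `X_t` at `b`. -/
noncomputable def fourierDensity (σ : ℝ) (ν : MeasureTheory.Measure ℝ) (t b : ℝ) : ℂ :=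
  ((1 / (2 * Real.pi) : ℝ) : ℂ) *
    ∫ lam : ℝ, Complex.exp (-(Complex.I) * b * lam) * Complex.exp ((t : ℂ) * charExponent σ ν lam)

open scoped Topology Real

/-!
After the substitution `λ = u / g t`, the claim is convergence of
`∫ e^{-ibu/g(t)} e^{tΨ(iu/g(t))} du`. Writing `Ψ` as an integral against the tail `ν̄` (layer cake)
and using `t ν̄(g(t) y) → y^{-α}` with Potter bounds gives
`t Ψ(iu/g(t)) → Γ(2-α)/(α-1) (iu)^α`. The integrand is dominated by `e^{c-c|u|^δ}`:
`Re Ψ(iλ)` is at most a negative multiple of `λ² ∫_{(-1/|λ|,0)} z² ν(dz)`, which the regular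
variation of `ν̄` controls for small `λ` and the condition on small jumps for large `λ`. The
limiting integral comes from analytic continuation in `w` of
`∫₀^∞ e^{-wu^α} du = w^{-1/α} Γ(1+1/α)`.
-/

section ComplexGammaIntegrals

lemma integrableOn_exp_neg_mul_rpow {p b : ℝ} (hp : 0 < p) (hb : 0 < b) :
    IntegrableOn (fun u : ℝ => Real.exp (-b * u ^ p)) (Ioi 0) := by
  simpa using integrableOn_rpow_mul_exp_neg_mul_rpow (s := 0) (by norm_num) hp hb

-- Both sides are analytic in `-w`, and they agree for `w > 0`.
lemma integral_cexp_neg_mul_rpow {p : ℝ} (hp : 0 < p) {w : ℂ} (hw : 0 < w.re) :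
    ∫ u in Ioi (0 : ℝ), Complex.exp (-w * (u ^ p : ℝ)) =
      w ^ (-1 / p : ℂ) * Real.Gamma (1 / p + 1) := by
  let F := ProbabilityTheory.complexMGF (fun u : ℝ => u ^ p) (volume.restrict (Ioi 0))
  let G := fun z : ℂ => (-z) ^ (-1 / p : ℂ) * Real.Gamma (1 / p + 1)
  have hUopen : IsOpen {z : ℂ | z.re < 0} := isOpen_lt Complex.continuous_re continuous_const
  have hF : AnalyticOnNhd ℂ F {z | z.re < 0} := by
    refine ProbabilityTheory.analyticOnNhd_complexMGF.mono fun z hz =>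
      mem_interior_iff_mem_nhds.2 ?_
    filter_upwards [Iio_mem_nhds (show z.re < 0 from hz)] with b hb
    simpa [ProbabilityTheory.integrableExpSet, IntegrableOn] using
      integrableOn_exp_neg_mul_rpow hp (neg_pos.2 hb)
  have hG : AnalyticOnNhd ℂ G {z | z.re < 0} := by
    refine DifferentiableOn.analyticOnNhd (fun z hz => ?_) hUopen
    exact ((differentiableAt_id.neg.cpow_const (.inl (by simpa using hz))).mul_const
      _).differentiableWithinAt
  have hreal : ∀ b : ℝ, 0 < b → F (-b : ℝ) = G (-b : ℝ) := fun b hb => by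
    simp only [F, G, ProbabilityTheory.complexMGF_ofReal, ProbabilityTheory.mgf,
      integral_exp_neg_mul_rpow hp hb]
    push_cast [Complex.ofReal_cpow hb.le]
    rw [neg_neg]
  have hfreq : ∃ᶠ z in 𝓝[≠] (-1 : ℂ), F z = G z := by
    have hlim : Tendsto (fun b : ℝ => ((-b : ℝ) : ℂ)) (𝓝[≠] 1) (𝓝[≠] (-1)) :=
      tendsto_nhdsWithin_iff.2 ⟨(Continuous.tendsto' (by fun_prop) _ _ (by simp)).mono_left
        nhdsWithin_le_nhds, by
          filter_upwards [self_mem_nhdsWithin] with b hb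
          simpa [← Complex.ofReal_one, Complex.ofReal_inj] using hb⟩
    exact hlim.frequently
      (((lt_mem_nhds one_pos).filter_mono nhdsWithin_le_nhds).mono hreal).frequently
  have hFG := hF.eqOn_of_preconnected_of_frequently_eq hG
    (convex_halfSpace_re_lt 0).isPreconnected (by simp) hfreq
    (show -w ∈ {z : ℂ | z.re < 0} by simpa using hw)
  simpa only [F, G, ProbabilityTheory.complexMGF, neg_neg] using hFG

-- Substitute `u = s ^ a` to reduce to the previous integral.
lemma integral_rpow_mul_cexp_neg_mul {a : ℝ} (ha : 0 < a) {r : ℂ} (hr : 0 < r.re) :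
    ∫ s in Ioi (0 : ℝ), (s ^ (a - 1) : ℝ) • Complex.exp (-r * s) =
      r ^ (-a : ℂ) * Real.Gamma a := by
  have hsubst := integral_comp_rpow_Ioi_of_pos
    (g := fun u : ℝ => Complex.exp (-r * (u ^ (1 / a) : ℝ))) ha
  rw [integral_cexp_neg_mul_rpow (one_div_pos.2 ha) hr] at hsubst
  have hcongr : ∀ s ∈ Ioi (0 : ℝ),
      (a * s ^ (a - 1)) • Complex.exp (-r * ((s ^ a) ^ (1 / a) : ℝ)) =
        a • (s ^ (a - 1) : ℝ) • Complex.exp (-r * s) := fun s hs => by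
    rw [← Real.rpow_mul (le_of_lt hs), mul_one_div_cancel ha.ne', Real.rpow_one, mul_smul]
  rw [setIntegral_congr_fun measurableSet_Ioi hcongr, integral_smul, one_div_one_div,
    Real.Gamma_add_one ha.ne', ← eq_inv_smul_iff₀ ha.ne'] at hsubst
  rw [hsubst, Complex.real_smul]
  push_cast
  have : (a : ℂ) ≠ 0 := mod_cast ha.ne'
  field_simp

end ComplexGammaIntegrals

section StableKernel

lemma norm_one_sub_cexp_neg_le {z : ℂ} (hz : 0 ≤ z.re) : ‖1 - Complex.exp (-z)‖ ≤ ‖z‖ := by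
  have hbound : ∀ x ∈ {x : ℂ | 0 ≤ x.re}, ‖Complex.exp (-x) * -1‖ ≤ 1 := fun x hx => by
    simpa [Complex.norm_exp] using hx
  simpa using Convex.norm_image_sub_le_of_norm_hasDerivWithin_le (y := 0)
    (fun x _ => ((hasDerivAt_id x).neg.cexp).hasDerivWithinAt) hbound
    (convex_halfSpace_re_ge 0) hz (by simp)

lemma norm_one_sub_cexp_neg_mul_le {r : ℂ} (hr : 0 ≤ r.re) {s : ℝ} (hs : 0 ≤ s) :
    ‖1 - Complex.exp (-r * s)‖ ≤ (‖r‖ + 2) * min 1 s := by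
  have hre : 0 ≤ (r * s).re := by simpa using mul_nonneg hr hs
  rw [neg_mul]
  rcases le_total s 1 with h | h
  · rw [min_eq_right h]
    calc ‖1 - Complex.exp (-(r * s))‖ ≤ ‖r * s‖ := norm_one_sub_cexp_neg_le hre
      _ = ‖r‖ * s := by rw [norm_mul, Complex.norm_of_nonneg hs]
      _ ≤ (‖r‖ + 2) * s := by gcongr; simp
  · rw [min_eq_left h]
    calc ‖1 - Complex.exp (-(r * s))‖ ≤ ‖(1 : ℂ)‖ + ‖Complex.exp (-(r * s))‖ := norm_sub_le _ _
      _ ≤ 1 + 1 := by rw [norm_one, Complex.norm_exp, Complex.neg_re]; gcongr; simpa using hre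
      _ ≤ (‖r‖ + 2) * 1 := by linarith [norm_nonneg r]

lemma integrableOn_smul_of_norm_le_min_one {E : Type*} [NormedAddCommGroup E] [NormedSpace ℝ E]
    {w : ℝ → ℝ} {k : ℝ → E} {M : ℝ} (hwm : Measurable w) (hw0 : ∀ s, 0 < s → 0 ≤ w s)
    (hw : IntegrableOn (fun s => min 1 s * w s) (Ioi 0))
    (hkm : AEStronglyMeasurable k (volume.restrict (Ioi 0)))
    (hk : ∀ s, 0 < s → ‖k s‖ ≤ M * min 1 s) : IntegrableOn (fun s => w s • k s) (Ioi 0) := by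
  refine (hw.const_mul M).mono' (hwm.aestronglyMeasurable.smul hkm) ?_
  filter_upwards [ae_restrict_mem measurableSet_Ioi] with s hs
  calc ‖w s • k s‖ = w s * ‖k s‖ := by rw [norm_smul, Real.norm_of_nonneg (hw0 s hs)]
    _ ≤ w s * (M * min 1 s) := mul_le_mul_of_nonneg_left (hk s hs) (hw0 s hs)
    _ = M * (min 1 s * w s) := by ring

lemma integrableOn_min_one_mul_rpow_neg {γ : ℝ} (h1 : 1 < γ) (h2 : γ < 2) :
    IntegrableOn (fun s : ℝ => min 1 s * s ^ (-γ)) (Ioi 0) := by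
  rw [← Ioc_union_Ioi_eq_Ioi zero_le_one]
  refine IntegrableOn.union ?_ ?_
  · refine IntegrableOn.congr_fun ((intervalIntegrable_iff_integrableOn_Ioc_of_le zero_le_one).1
      (intervalIntegral.intervalIntegrable_rpow' (r := 1 - γ) (by linarith)))
      (fun s hs => ?_) measurableSet_Ioc
    simp only [min_eq_right hs.2, sub_eq_add_neg, Real.rpow_add hs.1, Real.rpow_one]
  · refine IntegrableOn.congr_fun (integrableOn_Ioi_rpow_of_lt (neg_lt_neg h1) one_pos)
      (fun s hs => ?_) measurableSet_Ioi
    simp only [min_eq_left (le_of_lt (mem_Ioi.1 hs)), one_mul]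

lemma tendsto_min_one_mul_rpow_nhdsGT {α : ℝ} (h2 : α < 2) :
    Tendsto (fun s : ℝ => min 1 s * s ^ (1 - α)) (𝓝[>] 0) (𝓝 0) := by
  have hpow : Tendsto (fun s : ℝ => s ^ (2 - α)) (𝓝[>] 0) (𝓝 0) :=
    ((Real.continuous_rpow_const (by linarith)).tendsto' 0 0
      (Real.zero_rpow (by linarith))).mono_left nhdsWithin_le_nhds
  refine hpow.congr' ?_
  filter_upwards [Ioo_mem_nhdsGT one_pos] with s hs
  rw [min_eq_right hs.2.le, show 2 - α = 1 + (1 - α) by ring, Real.rpow_add hs.1, Real.rpow_one]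

lemma tendsto_min_one_mul_rpow_atTop {α : ℝ} (h1 : 1 < α) :
    Tendsto (fun s : ℝ => min 1 s * s ^ (1 - α)) atTop (𝓝 0) := by
  refine (tendsto_rpow_neg_atTop (sub_pos.2 h1)).congr' ?_
  filter_upwards [eventually_ge_atTop 1] with s hs
  rw [min_eq_left hs, one_mul, neg_sub]

lemma integrableOn_rpow_neg_smul_one_sub_cexp {α : ℝ} (h1 : 1 < α) (h2 : α < 2) {r : ℂ}
    (hr : 0 ≤ r.re) :
    IntegrableOn (fun s : ℝ => (s ^ (-α) : ℝ) • (1 - Complex.exp (-r * s))) (Ioi 0) :=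
  integrableOn_smul_of_norm_le_min_one (by fun_prop) (fun s hs => Real.rpow_nonneg hs.le _)
    (integrableOn_min_one_mul_rpow_neg h1 h2) (by fun_prop)
    fun s hs => norm_one_sub_cexp_neg_mul_le hr hs.le

lemma tendsto_one_sub_cexp_mul_rpow {α : ℝ} {r : ℂ} (hr : 0 ≤ r.re) {l : Filter ℝ}
    (hl : ∀ᶠ s in l, 0 < s) (h : Tendsto (fun s : ℝ => min 1 s * s ^ (1 - α)) l (𝓝 0)) :
    Tendsto (fun s : ℝ => (1 - Complex.exp (-r * s)) * ((s ^ (1 - α) / (1 - α) : ℝ) : ℂ)) l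
      (𝓝 0) := by
  refine squeeze_zero_norm' ?_ (by simpa using h.const_mul ((‖r‖ + 2) * |1 - α|⁻¹))
  filter_upwards [hl] with s hs
  rw [norm_mul, Complex.norm_real, norm_div, Real.norm_of_nonneg (Real.rpow_nonneg hs.le _),
    Real.norm_eq_abs, div_eq_mul_inv]
  calc _ ≤ (‖r‖ + 2) * min 1 s * (s ^ (1 - α) * |1 - α|⁻¹) := by
        gcongr; exact norm_one_sub_cexp_neg_mul_le hr hs.le
    _ = _ := by ring

lemma integral_mul_cexp_mul_rpow_div {α : ℝ} (h2 : α < 2) {r : ℂ} (hr : 0 < r.re) :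
    ∫ s in Ioi (0 : ℝ), r * Complex.exp (-r * s) * ((s ^ (1 - α) / (1 - α) : ℝ) : ℂ) =
      r / (1 - α : ℝ) * (r ^ (-(2 - α : ℝ) : ℂ) * Real.Gamma (2 - α)) := by
  rw [← integral_rpow_mul_cexp_neg_mul (by linarith) hr, ← integral_const_mul]
  refine integral_congr_ae (Eventually.of_forall fun s => ?_)
  simp only [Complex.real_smul, show 2 - α - 1 = 1 - α by ring]
  push_cast
  ring

-- Integration by parts turns this into the Gamma integral.
lemma integral_rpow_neg_smul_one_sub_cexp_of_re_pos {α : ℝ} (h1 : 1 < α) (h2 : α < 2) {r : ℂ}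
    (hr : 0 < r.re) :
    ∫ s in Ioi (0 : ℝ), (s ^ (-α) : ℝ) • (1 - Complex.exp (-r * s)) =
      (Real.Gamma (2 - α) / (α - 1) : ℝ) * r ^ (α - 1 : ℂ) := by
  have hr0 : r ≠ 0 := fun h => by simp [h] at hr
  have hα : 1 - α ≠ 0 := by linarith
  have hGamma : Real.Gamma (2 - α) ≠ 0 := (Real.Gamma_pos_of_pos (by linarith)).ne'
  have hu : ∀ s ∈ Ioi (0 : ℝ), HasDerivAt (fun x : ℝ => 1 - Complex.exp (-r * x))
      (r * Complex.exp (-r * s)) s := fun s _ =>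
    (((Complex.ofRealCLM.hasDerivAt (x := s)).const_mul (-r)).cexp.const_sub 1).congr_deriv
      (by simp [mul_comm])
  have hv : ∀ s ∈ Ioi (0 : ℝ), HasDerivAt (fun x : ℝ => ((x ^ (1 - α) / (1 - α) : ℝ) : ℂ))
      ((s ^ (-α) : ℝ) : ℂ) s := fun s hs => by
    have h := (Real.hasDerivAt_rpow_const (p := 1 - α) (.inl (ne_of_gt hs))).div_const (1 - α)
    rw [mul_div_cancel_left₀ _ hα, show 1 - α - 1 = -α by ring] at h
    exact h.ofReal_comp
  have hu'v : IntegrableOn (fun s : ℝ =>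
      r * Complex.exp (-r * s) * ((s ^ (1 - α) / (1 - α) : ℝ) : ℂ)) (Ioi 0) := by
    refine .of_integral_ne_zero ?_
    rw [integral_mul_cexp_mul_rpow_div h2 hr]
    exact mul_ne_zero (div_ne_zero hr0 (mod_cast hα))
      (mul_ne_zero (by simp [Complex.cpow_eq_zero_iff, hr0]) (mod_cast hGamma))
  have hparts := integral_Ioi_mul_deriv_eq_deriv_mul hu hv
    ((integrableOn_rpow_neg_smul_one_sub_cexp h1 h2 hr.le).congr_fun
      (fun s _ => by simp [mul_comm]) measurableSet_Ioi) hu'v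
    (tendsto_one_sub_cexp_mul_rpow hr.le self_mem_nhdsWithin (tendsto_min_one_mul_rpow_nhdsGT h2))
    (tendsto_one_sub_cexp_mul_rpow hr.le (eventually_gt_atTop 0)
      (tendsto_min_one_mul_rpow_atTop h1))
  simp only [Complex.real_smul, mul_comm ((_ ^ (-α) : ℝ) : ℂ)]
  rw [hparts, integral_mul_cexp_mul_rpow_div h2 hr,
    show (α - 1 : ℂ) = 1 + -(2 - α : ℝ) by push_cast; ring, Complex.cpow_add _ _ hr0,
    Complex.cpow_one, show 1 - α = -(α - 1) by ring]
  have hα' : (α - 1 : ℂ) ≠ 0 := by rw [sub_ne_zero] at hα ⊢; exact_mod_cast hα.symm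
  push_cast
  field_simp
  ring

lemma integral_rpow_neg_smul_one_sub_cexp {α : ℝ} (h1 : 1 < α) (h2 : α < 2) {r : ℂ}
    (hr : 0 ≤ r.re) (hslit : r ∈ Complex.slitPlane) :
    ∫ s in Ioi (0 : ℝ), (s ^ (-α) : ℝ) • (1 - Complex.exp (-r * s)) =
      (Real.Gamma (2 - α) / (α - 1) : ℝ) * r ^ (α - 1 : ℂ) := by
  have hshift : Tendsto (fun ε : ℝ => r + ε) (𝓝[>] 0) (𝓝 r) :=
    (Continuous.tendsto' (by fun_prop) _ _ (by simp)).mono_left nhdsWithin_le_nhds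
  have hint : Tendsto (fun ε : ℝ =>
      ∫ s in Ioi (0 : ℝ), (s ^ (-α) : ℝ) • (1 - Complex.exp (-(r + ε) * s))) (𝓝[>] 0)
      (𝓝 (∫ s in Ioi (0 : ℝ), (s ^ (-α) : ℝ) • (1 - Complex.exp (-r * s)))) := by
    refine tendsto_integral_filter_of_dominated_convergence
      (fun s => (‖r‖ + 1 + 2) * (min 1 s * s ^ (-α)))
      (Eventually.of_forall fun ε => by fun_prop) ?_
      ((integrableOn_min_one_mul_rpow_neg h1 h2).const_mul _)
      (ae_of_all _ fun s => ((Continuous.tendsto (f := fun z : ℂ =>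
        (s ^ (-α) : ℝ) • (1 - Complex.exp (-z * s))) (by fun_prop) r).comp hshift))
    filter_upwards [Ioo_mem_nhdsGT one_pos] with ε hε
    filter_upwards [ae_restrict_mem measurableSet_Ioi] with s (hs : 0 < s)
    have hnorm : ‖r + ε‖ ≤ ‖r‖ + 1 := (norm_add_le _ _).trans (by
      rw [Complex.norm_of_nonneg hε.1.le]; linarith [hε.2])
    rw [norm_smul, Real.norm_of_nonneg (by positivity)]
    calc s ^ (-α) * ‖1 - Complex.exp (-(r + ε) * s)‖
        ≤ s ^ (-α) * ((‖r + ε‖ + 2) * min 1 s) := by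
          gcongr
          exact norm_one_sub_cexp_neg_mul_le (by simpa using add_nonneg hr hε.1.le) hs.le
      _ ≤ s ^ (-α) * ((‖r‖ + 1 + 2) * min 1 s) := by gcongr
      _ = (‖r‖ + 1 + 2) * (min 1 s * s ^ (-α)) := by ring
  refine tendsto_nhds_unique hint (((hshift.cpow tendsto_const_nhds hslit).const_mul _).congr' ?_)
  filter_upwards [self_mem_nhdsWithin] with ε hε
  exact (integral_rpow_neg_smul_one_sub_cexp_of_re_pos h1 h2
    (by simpa using add_pos_of_nonneg_of_pos hr hε)).symm

end StableKernel

section StableIntegral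

lemma integral_eq_two_mul_re_of_neg_eq_conj {f : ℝ → ℂ} (hf : IntegrableOn f (Ioi 0))
    (hconj : ∀ u, 0 < u → f (-u) = (starRingEnd ℂ) (f u)) :
    ∫ u, f u = (2 * (∫ u in Ioi 0, f u).re : ℝ) := by
  have hneg : IntegrableOn (fun u => f (-u)) (Ioi 0) :=
    IntegrableOn.congr_fun (Complex.conjCLE.toContinuousLinearMap.integrable_comp hf)
      (fun u hu => (hconj u hu).symm) measurableSet_Ioi
  have hIic : IntegrableOn f (Iic 0) := by
    simpa using ((integrableOn_Ici_iff_integrableOn_Ioi).2 hneg).comp_neg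
  have hleft : ∫ u in Iic 0, f u = (starRingEnd ℂ) (∫ u in Ioi 0, f u) := by
    rw [← integral_conj, ← setIntegral_congr_fun measurableSet_Ioi hconj, integral_comp_neg_Ioi,
      neg_zero]
  rw [← intervalIntegral.integral_Iic_add_Ioi hIic hf, hleft, add_comm, Complex.add_conj]

lemma ofReal_mul_cexp_mul_I_cpow {ρ θ : ℝ} (hρ : 0 < ρ) (hθ : θ ∈ Ioc (-π) π) (a : ℝ) :
    (ρ * Complex.exp (θ * Complex.I)) ^ (a : ℂ) =
      (ρ ^ a : ℝ) * Complex.exp ((a * θ : ℝ) * Complex.I) := by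
  have hne : (ρ : ℂ) * Complex.exp (θ * Complex.I) ≠ 0 :=
    mul_ne_zero (mod_cast hρ.ne') (Complex.exp_ne_zero _)
  rw [Complex.cpow_def_of_ne_zero hne, Complex.log_ofReal_mul hρ (Complex.exp_ne_zero _),
    Complex.log_exp (by simpa using hθ.1) (by simpa using hθ.2), Real.rpow_def_of_pos hρ,
    Complex.ofReal_exp, ← Complex.exp_add]
  push_cast
  ring_nf

lemma I_mul_ofReal_cpow {u : ℝ} (hu : 0 < u) (α : ℝ) :
    (Complex.I * u) ^ (α : ℂ) = (u ^ α : ℝ) * Complex.exp ((α * (π / 2) : ℝ) * Complex.I) := by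
  rw [← ofReal_mul_cexp_mul_I_cpow hu ⟨by linarith [Real.pi_pos], by linarith [Real.pi_pos]⟩,
    mul_comm]
  push_cast
  rw [Complex.exp_pi_div_two_mul_I]

lemma I_mul_neg_ofReal_cpow {u : ℝ} (hu : 0 < u) (α : ℝ) :
    (Complex.I * (-u : ℝ)) ^ (α : ℂ) = (starRingEnd ℂ) ((Complex.I * u) ^ (α : ℂ)) := by
  have harg : (Complex.I * u).arg ≠ π := by
    rw [mul_comm, Complex.arg_real_mul _ hu, Complex.arg_I]
    linarith [Real.pi_pos]
  nth_rewrite 2 [← Complex.conj_ofReal α]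
  rw [← Complex.conj_cpow _ _ harg]
  simp

lemma integral_cexp_stable {α K : ℝ} (h1 : 1 < α) (h2 : α < 2) (hK : 0 < K) :
    ∫ u : ℝ, Complex.exp (K * (Complex.I * u) ^ (α : ℂ)) =
      (2 * (Real.Gamma (1 / α + 1) * K ^ (-1 / α) * Real.sin (π / α)) : ℝ) := by
  have hα : 0 < α := by linarith
  have hπ := Real.pi_pos
  -- `K * I ^ α = -w` with `w` in the right half-plane
  set w : ℂ := K * Complex.exp ((α * (π / 2) - π : ℝ) * Complex.I) with hw
  have hwre : 0 < w.re := by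
    rw [hw, Complex.re_ofReal_mul, Complex.exp_ofReal_mul_I_re]
    exact mul_pos hK (Real.cos_pos_of_mem_Ioo ⟨by nlinarith, by nlinarith⟩)
  have hexp : ∀ u ∈ Ioi (0 : ℝ),
      Complex.exp (-w * (u ^ α : ℝ)) = Complex.exp (K * (Complex.I * u) ^ (α : ℂ)) := fun u hu => by
    rw [I_mul_ofReal_cpow hu, hw, Complex.ofReal_sub, sub_mul, Complex.exp_sub_pi_mul_I]
    ring_nf
  have hint : IntegrableOn (fun u : ℝ => Complex.exp (K * (Complex.I * u) ^ (α : ℂ))) (Ioi 0) := by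
    refine IntegrableOn.congr_fun ?_ hexp measurableSet_Ioi
    refine (integrableOn_exp_neg_mul_rpow hα hwre).mono' (by fun_prop) (ae_of_all _ fun u => ?_)
    simp [Complex.norm_exp]
  have hconj : ∀ u : ℝ, 0 < u → Complex.exp (K * (Complex.I * (-u : ℝ)) ^ (α : ℂ)) =
      (starRingEnd ℂ) (Complex.exp (K * (Complex.I * u) ^ (α : ℂ))) := fun u hu => by
    rw [← Complex.exp_conj, map_mul, Complex.conj_ofReal, I_mul_neg_ofReal_cpow hu]
  have hpow : w ^ (-1 / α : ℂ) =
      (K ^ (-1 / α) : ℝ) * Complex.exp ((-(π / 2 - π / α) : ℝ) * Complex.I) := by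
    rw [show (-1 / α : ℂ) = (-1 / α : ℝ) by push_cast; rfl, hw,
      ofReal_mul_cexp_mul_I_cpow hK ⟨by nlinarith, by nlinarith⟩]
    congr 4
    field_simp
  rw [integral_eq_two_mul_re_of_neg_eq_conj hint hconj,
    ← setIntegral_congr_fun measurableSet_Ioi hexp, integral_cexp_neg_mul_rpow hα hwre, hpow,
    Complex.re_mul_ofReal, Complex.re_ofReal_mul, Complex.exp_ofReal_mul_I_re, Real.cos_neg,
    Real.cos_pi_div_two_sub]
  ring_nf

end StableIntegral

section RegularVariation

/-- `f` is regularly varying at infinity with index `ρ`. Positivity of `f` is not built in; since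
`x / 0 = 0`, the case `c = 1` still forces `f x ≠ 0` for all large `x`. -/
def IsRegularlyVarying (f : ℝ → ℝ) (ρ : ℝ) : Prop :=
  ∀ c : ℝ, 0 < c → Tendsto (fun x => f (c * x) / f x) atTop (𝓝 (c ^ ρ))

variable {f g N : ℝ → ℝ} {α ρ : ℝ}

lemma IsRegularlyVarying.eventually_ne_zero (hf : IsRegularlyVarying f ρ) :
    ∀ᶠ x in atTop, f x ≠ 0 := by
  have h := hf 1 one_pos
  rw [Real.one_rpow] at h
  filter_upwards [h.eventually_ne one_ne_zero] with x hx hfx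
  simp [hfx] at hx

lemma IsRegularlyVarying.pos_of_antitoneOn (hf : IsRegularlyVarying f ρ) (hf0 : ∀ x, 0 ≤ f x)
    (hanti : AntitoneOn f (Ioi 0)) {x : ℝ} (hx : 0 < x) : 0 < f x := by
  obtain ⟨y, hy, hxy⟩ := (hf.eventually_ne_zero.and (eventually_ge_atTop x)).exists
  exact ((hf0 y).lt_of_ne' hy).trans_le (hanti hx (hx.trans_le hxy) hxy)

lemma IsRegularlyVarying.inv (hf : IsRegularlyVarying f ρ) :
    IsRegularlyVarying (fun x => (f x)⁻¹) (-ρ) := fun c hc => by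
  refine (((hf c hc).inv₀ (Real.rpow_pos_of_pos hc _).ne').congr fun x => ?_).trans
    (by rw [Real.rpow_neg hc.le])
  rw [inv_div, inv_div_inv]

lemma le_two_pow_rpow_mul_of_doubling {y₀ : ℝ} (hy₀ : 0 ≤ y₀)
    (hdouble : ∀ y ≥ y₀, f (2 * y) ≤ 2 ^ ρ * f y) (n : ℕ) {z : ℝ} (hz : y₀ ≤ z) :
    f (2 ^ n * z) ≤ (2 ^ n : ℝ) ^ ρ * f z := by
  induction n with
  | zero => simp
  | succ n ih =>
    have hle : y₀ ≤ 2 ^ n * z :=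
      hz.trans (le_mul_of_one_le_left (hy₀.trans hz) (one_le_pow₀ one_le_two))
    calc f (2 ^ (n + 1) * z) = f (2 * (2 ^ n * z)) := by ring_nf
      _ ≤ 2 ^ ρ * f (2 ^ n * z) := hdouble _ hle
      _ ≤ 2 ^ ρ * ((2 ^ n) ^ ρ * f z) := by gcongr
      _ = (2 ^ (n + 1) : ℝ) ^ ρ * f z := by
        rw [pow_succ', Real.mul_rpow zero_le_two (by positivity), mul_assoc]

lemma two_pow_rpow_le (n : ℕ) {q : ℝ} (hq1 : 1 ≤ q) (hq2 : q ≤ 2) :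
    (2 ^ n : ℝ) ^ ρ ≤ 2 ^ |ρ| * (2 ^ n * q) ^ ρ := by
  have hq0 : 0 < q := by linarith
  have hpow : q ^ (-ρ) ≤ 2 ^ |ρ| :=
    (Real.rpow_le_rpow_of_exponent_le hq1 (neg_le_abs ρ)).trans
      (Real.rpow_le_rpow hq0.le hq2 (abs_nonneg ρ))
  calc (2 ^ n : ℝ) ^ ρ = q ^ (-ρ) * (2 ^ n * q) ^ ρ := by
        rw [Real.mul_rpow (by positivity) hq0.le, Real.rpow_neg hq0.le]
        field_simp
    _ ≤ 2 ^ |ρ| * (2 ^ n * q) ^ ρ := by gcongr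

lemma le_mul_rpow_of_doubling {y₀ D : ℝ} (hy₀ : 0 < y₀) (hf0 : ∀ y ≥ y₀, 0 ≤ f y)
    (hdouble : ∀ y ≥ y₀, f (2 * y) ≤ 2 ^ ρ * f y)
    (hlocal : ∀ y ≥ y₀, ∀ x ∈ Icc y (2 * y), f x ≤ D * f y) {y x : ℝ} (hy : y₀ ≤ y)
    (hyx : y ≤ x) : f x ≤ 2 ^ |ρ| * D * (x / y) ^ ρ * f y := by
  have hy0 : 0 < y := hy₀.trans_le hy
  obtain ⟨n, hn, hn'⟩ := exists_nat_pow_near ((one_le_div hy0).2 hyx) one_lt_two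
  rw [pow_succ] at hn'
  set q := x / y / 2 ^ n with hq
  have hxy : x / y = 2 ^ n * q := by rw [hq]; field_simp
  have hx : x = 2 ^ n * (q * y) := by rw [← mul_assoc, ← hxy, div_mul_cancel₀ _ hy0.ne']
  have hq1 : 1 ≤ q := (one_le_div (by positivity)).2 hn
  have hq2 : q ≤ 2 := ((div_lt_iff₀ (by positivity)).2 (by linarith)).le
  have hyq : y ≤ q * y := le_mul_of_one_le_left hy0.le hq1
  calc f x ≤ (2 ^ n : ℝ) ^ ρ * f (q * y) := by
        rw [hx]; exact le_two_pow_rpow_mul_of_doubling hy₀.le hdouble n (hy.trans hyq)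
    _ ≤ (2 ^ |ρ| * (2 ^ n * q) ^ ρ) * (D * f y) :=
      mul_le_mul (two_pow_rpow_le n hq1 hq2)
        (hlocal y hy _ ⟨hyq, by gcongr⟩) (hf0 _ (hy.trans hyq)) (by positivity)
    _ = 2 ^ |ρ| * D * (x / y) ^ ρ * f y := by rw [hxy]; ring

lemma IsRegularlyVarying.eventually_doubling {κ : ℝ} (hf : IsRegularlyVarying f κ)
    (hf0 : ∀ᶠ x in atTop, 0 < f x) (hκ : κ < ρ) : ∀ᶠ y in atTop, f (2 * y) ≤ 2 ^ ρ * f y := by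
  have hlt : (2 : ℝ) ^ κ < 2 ^ ρ := Real.rpow_lt_rpow_of_exponent_lt one_lt_two hκ
  filter_upwards [(hf 2 two_pos).eventually_lt_const hlt, hf0] with y hy hy0
  exact ((div_lt_iff₀ hy0).1 hy).le

lemma IsRegularlyVarying.potter {κ D : ℝ} (hf : IsRegularlyVarying f κ)
    (hf0 : ∀ᶠ x in atTop, 0 < f x) (hκ : κ < ρ) (hD : 0 < D)
    (hlocal : ∀ᶠ y in atTop, ∀ x ∈ Icc y (2 * y), f x ≤ D * f y) :
    ∃ C > 0, ∀ᶠ y in atTop, ∀ x ≥ y, f x ≤ C * (x / y) ^ ρ * f y := by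
  obtain ⟨y₀, hy₀⟩ := eventually_atTop.1
    (((hf.eventually_doubling hf0 hκ).and (hf0.and hlocal)).and (eventually_gt_atTop 0))
  refine ⟨2 ^ |ρ| * D, by positivity, ?_⟩
  filter_upwards [eventually_ge_atTop y₀] with y hy x hyx
  exact le_mul_rpow_of_doubling (hy₀ y₀ le_rfl).2 (fun z hz => (hy₀ z hz).1.2.1.le)
    (fun z hz => (hy₀ z hz).1.1) (fun z hz => (hy₀ z hz).1.2.2) hy hyx

lemma IsRegularlyVarying.potter_upper (hN : IsRegularlyVarying N (-α))
    (hanti : AntitoneOn N (Ioi 0)) (hpos : ∀ x, 0 < x → 0 < N x) {γ : ℝ} (hγ : γ < α) :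
    ∃ C > 0, ∀ᶠ y in atTop, ∀ x ≥ y, N x ≤ C * (x / y) ^ (-γ) * N y := by
  refine hN.potter ((eventually_gt_atTop 0).mono hpos) (neg_lt_neg hγ) one_pos ?_
  filter_upwards [eventually_gt_atTop 0] with y hy x hx
  simpa using hanti hy (hy.trans_le hx.1) hx.1

lemma IsRegularlyVarying.potter_lower (hN : IsRegularlyVarying N (-α))
    (hanti : AntitoneOn N (Ioi 0)) (hpos : ∀ x, 0 < x → 0 < N x) {γ : ℝ} (hγ : α < γ) :
    ∃ C > 0, ∀ᶠ y in atTop, ∀ x ≥ y, N y ≤ C * (x / y) ^ γ * N x := by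
  have hinv := hN.inv
  rw [neg_neg] at hinv
  have hinv0 : ∀ᶠ x in atTop, 0 < (N x)⁻¹ :=
    (eventually_gt_atTop 0).mono fun x hx => inv_pos.2 (hpos x hx)
  obtain ⟨C, hC, hpotter⟩ := hinv.potter hinv0 hγ (show (0 : ℝ) < 2 ^ γ by positivity) (by
    filter_upwards [hinv.eventually_doubling hinv0 hγ, eventually_gt_atTop 0] with y hy hy0 x hx
    have hx0 : 0 < x := hy0.trans_le hx.1
    exact (inv_anti₀ (hpos _ (by positivity))
      (hanti hx0 (mem_Ioi.2 (by positivity)) hx.2)).trans hy)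
  refine ⟨C, hC, ?_⟩
  filter_upwards [hpotter, eventually_gt_atTop 0] with y hy hy0 x hx
  have hNx := hpos x (hy0.trans_le hx)
  have h := hy x hx
  rwa [← div_eq_mul_inv, inv_le_iff_one_le_mul₀ hNx, div_mul_eq_mul_div,
    one_le_div (hpos y hy0)] at h

end RegularVariation

section AsymptoticInverse

variable {N g : ℝ → ℝ} {α : ℝ}

lemma tendsto_atTop_of_tail_inverse (hanti : AntitoneOn N (Ioi 0)) (hpos : ∀ x, 0 < x → 0 < N x)
    (hgpos : ∀ᶠ t in atTop, 0 < g t) (hg : Tendsto (fun t => t * N (g t)) atTop (𝓝 1)) :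
    Tendsto g atTop atTop := by
  refine tendsto_atTop.2 fun M => ?_
  have hM : 0 < N (max M 1) := hpos _ (by positivity)
  filter_upwards [hgpos, hg.eventually_lt_const one_lt_two, eventually_gt_atTop (2 / N (max M 1))]
    with t hgt ht htM
  rw [div_lt_iff₀ hM] at htM
  by_contra! hlt
  have ht0 : 0 < t := pos_of_mul_pos_left (two_pos.trans htM) hM.le
  have hanti' := hanti hgt (mem_Ioi.2 (by positivity)) (hlt.le.trans (le_max_left M 1))
  linarith [mul_le_mul_of_nonneg_left hanti' ht0.le]

lemma eventually_le_mul_rpow_of_tail_inverse (hN : IsRegularlyVarying N (-α))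
    (hanti : AntitoneOn N (Ioi 0)) (hpos : ∀ x, 0 < x → 0 < N x)
    (hgtop : Tendsto g atTop atTop) (hg : Tendsto (fun t => t * N (g t)) atTop (𝓝 1))
    {γ : ℝ} (hγ : α < γ) : ∃ C > 0, ∀ᶠ t in atTop, t ≤ C * g t ^ γ := by
  obtain ⟨C, hC, hpotter⟩ := hN.potter_lower hanti hpos hγ
  obtain ⟨y, hy, hy0⟩ := (hpotter.and (eventually_gt_atTop 0)).exists
  have hNy := hpos y hy0
  refine ⟨2 * C / (y ^ γ * N y), by positivity, ?_⟩
  filter_upwards [hg.eventually_lt_const one_lt_two, hgtop.eventually_ge_atTop y,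
    eventually_gt_atTop 0] with t ht hgt ht0
  have hgt0 : 0 < g t := hy0.trans_le hgt
  rw [div_mul_eq_mul_div, le_div_iff₀ (by positivity)]
  calc t * (y ^ γ * N y) ≤ t * (y ^ γ * (C * (g t / y) ^ γ * N (g t))) := by
        gcongr; exact hy _ hgt
    _ = C * g t ^ γ * (t * N (g t)) := by rw [Real.div_rpow hgt0.le hy0.le]; field_simp
    _ ≤ C * g t ^ γ * 2 := by gcongr
    _ = 2 * C * g t ^ γ := by ring

lemma eventually_mul_rpow_le_of_tail_inverse (hN : IsRegularlyVarying N (-α))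
    (hanti : AntitoneOn N (Ioi 0)) (hpos : ∀ x, 0 < x → 0 < N x)
    (hgtop : Tendsto g atTop atTop) (hg : Tendsto (fun t => t * N (g t)) atTop (𝓝 1))
    {γ : ℝ} (hγ : γ < α) : ∃ c > 0, ∀ᶠ t in atTop, c * g t ^ γ ≤ t := by
  obtain ⟨C, hC, hpotter⟩ := hN.potter_upper hanti hpos hγ
  obtain ⟨y, hy, hy0⟩ := (hpotter.and (eventually_gt_atTop 0)).exists
  have hNy := hpos y hy0
  refine ⟨(2 * C * y ^ γ * N y)⁻¹, by positivity, ?_⟩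
  filter_upwards [hg.eventually_const_lt one_half_lt_one, hgtop.eventually_ge_atTop y,
    eventually_gt_atTop 0] with t ht hgt ht0
  have hgt0 : 0 < g t := hy0.trans_le hgt
  rw [inv_mul_le_iff₀ (by positivity)]
  have hbound : 1 / 2 ≤ t * (C * (g t / y) ^ (-γ) * N y) :=
    ht.le.trans (by gcongr; exact hy _ hgt)
  calc g t ^ γ = 2 * g t ^ γ * (1 / 2) := by ring
    _ ≤ 2 * g t ^ γ * (t * (C * (g t / y) ^ (-γ) * N y)) := by gcongr
    _ = 2 * C * y ^ γ * N y * t := by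
      rw [Real.rpow_neg (by positivity), Real.div_rpow hgt0.le hy0.le]; field_simp

lemma tendsto_div_sq_of_tail_inverse (hN : IsRegularlyVarying N (-α)) (hα2 : α < 2)
    (hanti : AntitoneOn N (Ioi 0)) (hpos : ∀ x, 0 < x → 0 < N x)
    (hgtop : Tendsto g atTop atTop) (hg : Tendsto (fun t => t * N (g t)) atTop (𝓝 1)) :
    Tendsto (fun t => t / g t ^ 2) atTop (𝓝 0) := by
  obtain ⟨γ, hγ, hγ2⟩ := exists_between hα2
  obtain ⟨C, -, hbound⟩ := eventually_le_mul_rpow_of_tail_inverse hN hanti hpos hgtop hg hγ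
  have hlim : Tendsto (fun t => C * g t ^ (-(2 - γ))) atTop (𝓝 0) := by
    simpa using ((tendsto_rpow_neg_atTop (sub_pos.2 hγ2)).comp hgtop).const_mul C
  refine squeeze_zero' ?_ ?_ hlim
  · filter_upwards [eventually_ge_atTop 0] with t ht using by positivity
  · filter_upwards [hbound, hgtop.eventually_gt_atTop 0] with t ht hgt
    rw [neg_sub, Real.rpow_sub hgt, Real.rpow_two, ← mul_div_assoc]
    gcongr

lemma eventually_mul_tail_le (hN : IsRegularlyVarying N (-α)) (hanti : AntitoneOn N (Ioi 0))
    (hpos : ∀ x, 0 < x → 0 < N x) (hgtop : Tendsto g atTop atTop)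
    (hg : Tendsto (fun t => t * N (g t)) atTop (𝓝 1)) {γ₁ γ₂ : ℝ} (hγ₁ : γ₁ < α) (hγ₂ : α < γ₂) :
    ∃ C > 0, ∃ y₀ ≥ 1, ∀ᶠ t in atTop, ∀ s > 0, y₀ < g t * s →
      t * N (g t * s) ≤ C * (s ^ (-γ₁) + s ^ (-γ₂)) := by
  obtain ⟨C₁, hC₁, hupper⟩ := hN.potter_upper hanti hpos hγ₁
  obtain ⟨C₂, hC₂, hlower⟩ := hN.potter_lower hanti hpos hγ₂
  obtain ⟨y₀, hy₀⟩ := eventually_atTop.1 ((hupper.and hlower).and (eventually_ge_atTop 1))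
  refine ⟨2 * (C₁ + C₂), by positivity, y₀, (hy₀ y₀ le_rfl).2, ?_⟩
  filter_upwards [hg.eventually_lt_const one_lt_two, hgtop.eventually_ge_atTop y₀,
    hgtop.eventually_gt_atTop 0, eventually_ge_atTop 0] with t ht hgt hgt0 ht0 s hs hgs
  have hle : ∀ A > 0, ∀ γ : ℝ, N (g t * s) ≤ A * s ^ (-γ) * N (g t) →
      t * N (g t * s) ≤ 2 * (A * s ^ (-γ)) := fun A hA γ h => by
    calc t * N (g t * s) ≤ t * (A * s ^ (-γ) * N (g t)) := by gcongr
      _ = t * N (g t) * (A * s ^ (-γ)) := by ring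
      _ ≤ 2 * (A * s ^ (-γ)) := by gcongr
  have h₁ : 0 ≤ s ^ (-γ₁) := by positivity
  have h₂ : 0 ≤ s ^ (-γ₂) := by positivity
  rcases le_total 1 s with hs1 | hs1
  · have h := (hy₀ _ hgt).1.1 (g t * s) (le_mul_of_one_le_right hgt0.le hs1)
    rw [mul_div_cancel_left₀ _ hgt0.ne'] at h
    nlinarith [hle C₁ hC₁ γ₁ h]
  · have h := (hy₀ _ hgs.le).1.2 (g t) (mul_le_of_le_one_right hgt0.le hs1)
    rw [div_mul_cancel_left₀ hgt0.ne', Real.inv_rpow hs.le, ← Real.rpow_neg hs.le] at h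
    nlinarith [hle C₂ hC₂ γ₂ h]

end AsymptoticInverse

section Abelian

variable {N g : ℝ → ℝ} {α : ℝ}

lemma integrableOn_min_one_mul_comp_mul (hNm : Measurable N) (hpos : ∀ x, 0 < x → 0 < N x)
    (hint : IntegrableOn (fun y => min 1 y * N y) (Ioi 0)) {a : ℝ} (ha : 1 ≤ a) :
    IntegrableOn (fun s => min 1 s * N (a * s)) (Ioi 0) := by
  have ha0 : 0 < a := by linarith
  have hcomp : IntegrableOn (fun s => min 1 (a * s) * N (a * s)) (Ioi 0) := by
    rwa [integrableOn_Ioi_comp_mul_left_iff (fun y => min 1 y * N y) 0 ha0, mul_zero]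
  refine hcomp.mono' (by fun_prop) ?_
  filter_upwards [ae_restrict_mem measurableSet_Ioi] with s (hs : 0 < s)
  have hN0 := hpos (a * s) (by positivity)
  rw [Real.norm_of_nonneg (by positivity)]
  gcongr
  exact le_mul_of_one_le_left hs.le ha

variable {E : Type*} [NormedAddCommGroup E] [NormedSpace ℝ E]

lemma tendsto_setIntegral_tail_indicator_Iic (hNm : Measurable N) (hpos : ∀ x, 0 < x → 0 < N x)
    (hint : IntegrableOn (fun y => min 1 y * N y) (Ioi 0)) (hgtop : Tendsto g atTop atTop)
    (hg2 : Tendsto (fun t => t / g t ^ 2) atTop (𝓝 0)) {k : ℝ → E} {M : ℝ}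
    (hk : ∀ s, 0 < s → ‖k s‖ ≤ M * min 1 s) {y₀ : ℝ} (hy₀ : 1 ≤ y₀) :
    Tendsto (fun t => ∫ s in Ioi 0, (t * (Iic y₀).indicator N (g t * s)) • k s) atTop (𝓝 0) := by
  have hM : 0 ≤ M := by simpa using (norm_nonneg _).trans (hk 1 one_pos)
  have hmoment : IntegrableOn (fun y => y * (Iic y₀).indicator N y) (Ioi 0) := by
    refine (hint.const_mul y₀).mono' (by fun_prop (disch := measurability)) ?_
    filter_upwards [ae_restrict_mem measurableSet_Ioi] with y (hy : 0 < y)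
    have hN0 := hpos y hy
    by_cases hyy₀ : y ≤ y₀
    · have hmin : y ≤ y₀ * min 1 y := by rcases le_total 1 y with h | h <;> simp [h] <;> nlinarith
      rw [indicator_of_mem (mem_Iic.2 hyy₀), Real.norm_of_nonneg (by positivity), ← mul_assoc]
      gcongr
    · rw [indicator_of_notMem (by simpa using hyy₀), mul_zero, norm_zero]
      positivity
  refine squeeze_zero_norm' ?_ (by
    simpa using hg2.mul_const (M * ∫ y in Ioi 0, y * (Iic y₀).indicator N y))
  filter_upwards [hgtop.eventually_gt_atTop 0, eventually_ge_atTop 0] with t hgt ht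
  have hscaled : ∫ s in Ioi (0 : ℝ), (t * M / g t) * ((g t * s) * (Iic y₀).indicator N (g t * s)) =
      t / g t ^ 2 * (M * ∫ y in Ioi 0, y * (Iic y₀).indicator N y) := by
    rw [integral_const_mul, integral_comp_mul_left_Ioi (fun y => y * (Iic y₀).indicator N y) 0 hgt,
      mul_zero, smul_eq_mul]
    field_simp
  rw [← hscaled]
  refine norm_integral_le_of_norm_le (((integrableOn_Ioi_comp_mul_left_iff
    (fun y => y * (Iic y₀).indicator N y) 0 hgt).2 (by rwa [mul_zero])).const_mul _) ?_
  filter_upwards [ae_restrict_mem measurableSet_Ioi] with s (hs : 0 < s)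
  have hN0 : 0 ≤ (Iic y₀).indicator N (g t * s) :=
    indicator_apply_nonneg fun _ => (hpos _ (by positivity)).le
  rw [norm_smul, Real.norm_of_nonneg (by positivity)]
  calc t * (Iic y₀).indicator N (g t * s) * ‖k s‖
      ≤ t * (Iic y₀).indicator N (g t * s) * (M * s) := by
        gcongr; exact (hk s hs).trans (by gcongr; exact min_le_right _ _)
    _ = t * M / g t * (g t * s * (Iic y₀).indicator N (g t * s)) := by field_simp

lemma tendsto_setIntegral_tail_indicator_Ioi (hN : IsRegularlyVarying N (-α)) (hNm : Measurable N)
    (hgtop : Tendsto g atTop atTop) (hg : Tendsto (fun t => t * N (g t)) atTop (𝓝 1))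
    (hpos : ∀ x, 0 < x → 0 < N x)
    {k : ℝ → E} {M : ℝ} (hkm : AEStronglyMeasurable k (volume.restrict (Ioi 0)))
    (hk : ∀ s, 0 < s → ‖k s‖ ≤ M * min 1 s) {C y₀ γ₁ γ₂ : ℝ} (hγ₁ : γ₁ ∈ Ioo 1 2)
    (hγ₂ : γ₂ ∈ Ioo 1 2) (hC : 0 < C)
    (hpotter : ∀ᶠ t in atTop, ∀ s > 0, y₀ < g t * s →
      t * N (g t * s) ≤ C * (s ^ (-γ₁) + s ^ (-γ₂))) :
    Tendsto (fun t => ∫ s in Ioi 0, (t * (Ioi y₀).indicator N (g t * s)) • k s) atTop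
      (𝓝 (∫ s in Ioi 0, (s ^ (-α) : ℝ) • k s)) := by
  refine tendsto_integral_filter_of_dominated_convergence
    (fun s => M * C * (min 1 s * s ^ (-γ₁) + min 1 s * s ^ (-γ₂)))
    (Eventually.of_forall fun t => ?_) ?_
    (((integrableOn_min_one_mul_rpow_neg hγ₁.1 hγ₁.2).add
      (integrableOn_min_one_mul_rpow_neg hγ₂.1 hγ₂.2)).const_mul _) ?_
  · have hm : Measurable fun s => t * (Ioi y₀).indicator N (g t * s) :=
      ((hNm.indicator measurableSet_Ioi).comp (measurable_const_mul _)).const_mul _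
    exact hm.aestronglyMeasurable.smul hkm
  · filter_upwards [hpotter, hgtop.eventually_gt_atTop 0, eventually_ge_atTop 0] with t hbd hgt ht
    filter_upwards [ae_restrict_mem measurableSet_Ioi] with s (hs : 0 < s)
    have hle : t * (Ioi y₀).indicator N (g t * s) ≤ C * (s ^ (-γ₁) + s ^ (-γ₂)) := by
      by_cases h : y₀ < g t * s
      · rw [indicator_of_mem (mem_Ioi.2 h)]; exact hbd s hs h
      · rw [indicator_of_notMem (by simpa using h), mul_zero]; positivity
    have hN0 : 0 ≤ (Ioi y₀).indicator N (g t * s) :=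
      indicator_apply_nonneg fun _ => (hpos _ (by positivity)).le
    rw [norm_smul, Real.norm_of_nonneg (by positivity)]
    calc _ ≤ C * (s ^ (-γ₁) + s ^ (-γ₂)) * (M * min 1 s) := by gcongr; exact hk s hs
      _ = _ := by ring
  · filter_upwards [ae_restrict_mem measurableSet_Ioi] with s (hs : 0 < s)
    refine Tendsto.smul_const ?_ _
    have hratio : Tendsto (fun t => t * N (g t) * (N (s * g t) / N (g t))) atTop
        (𝓝 (s ^ (-α))) := by
      simpa using hg.mul ((hN s hs).comp hgtop)
    refine hratio.congr' ?_
    filter_upwards [hgtop.eventually_gt_atTop 0, hgtop.eventually_gt_atTop (y₀ / s)] with t hgt hgs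
    have hmem : g t * s ∈ Ioi y₀ := (div_lt_iff₀ hs).1 hgs
    rw [indicator_of_mem hmem, mul_comm s]
    field_simp [(hpos _ hgt).ne']

lemma integrableOn_mul_comp_mul_smul (hNm : Measurable N) (hpos : ∀ x, 0 < x → 0 < N x)
    (hint : IntegrableOn (fun y => min 1 y * N y) (Ioi 0)) {k : ℝ → E} {M : ℝ}
    (hkm : AEStronglyMeasurable k (volume.restrict (Ioi 0)))
    (hk : ∀ s, 0 < s → ‖k s‖ ≤ M * min 1 s) {t a : ℝ} (ht : 0 ≤ t) (ha : 1 ≤ a) :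
    IntegrableOn (fun s => (t * N (a * s)) • k s) (Ioi 0) := by
  refine integrableOn_smul_of_norm_le_min_one (by fun_prop)
    (fun s hs => mul_nonneg ht (hpos _ (by positivity)).le) ?_ hkm hk
  simpa only [IntegrableOn, mul_left_comm] using
    (integrableOn_min_one_mul_comp_mul hNm hpos hint ha).const_mul t

theorem tendsto_setIntegral_tail_smul (h1 : 1 < α) (h2 : α < 2) (hN : IsRegularlyVarying N (-α))
    (hNm : Measurable N) (hanti : AntitoneOn N (Ioi 0)) (hpos : ∀ x, 0 < x → 0 < N x)
    (hint : IntegrableOn (fun y => min 1 y * N y) (Ioi 0)) (hgtop : Tendsto g atTop atTop)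
    (hg : Tendsto (fun t => t * N (g t)) atTop (𝓝 1)) {k : ℝ → E} {M : ℝ}
    (hkm : AEStronglyMeasurable k (volume.restrict (Ioi 0)))
    (hk : ∀ s, 0 < s → ‖k s‖ ≤ M * min 1 s) :
    Tendsto (fun t => ∫ s in Ioi 0, (t * N (g t * s)) • k s) atTop
      (𝓝 (∫ s in Ioi 0, (s ^ (-α) : ℝ) • k s)) := by
  obtain ⟨γ₁, hγ₁, hγ₁'⟩ := exists_between h1
  obtain ⟨γ₂, hγ₂, hγ₂'⟩ := exists_between h2
  obtain ⟨C, hC, y₀, hy₀, hpotter⟩ := eventually_mul_tail_le hN hanti hpos hgtop hg hγ₁' hγ₂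
  have hsmall := tendsto_setIntegral_tail_indicator_Iic hNm hpos hint hgtop
    (tendsto_div_sq_of_tail_inverse hN h2 hanti hpos hgtop hg) hk hy₀
  have hlarge := tendsto_setIntegral_tail_indicator_Ioi hN hNm hgtop hg hpos hkm hk
    ⟨hγ₁, hγ₁'.trans h2⟩ ⟨h1.trans hγ₂, hγ₂'⟩ hC hpotter
  have hsum := hsmall.add hlarge
  rw [zero_add] at hsum
  refine hsum.congr' ?_
  filter_upwards [hgtop.eventually_ge_atTop 1, eventually_ge_atTop 0] with t hgt ht
  have hF := integrableOn_mul_comp_mul_smul hNm hpos hint hkm hk ht hgt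
  have hpart : ∀ S : Set ℝ, MeasurableSet S →
      IntegrableOn (fun s => (t * S.indicator N (g t * s)) • k s) (Ioi 0) := fun S hS =>
    (hF.indicator (hS.preimage (measurable_const_mul (g t)))).congr (ae_of_all _ fun s => by
      by_cases h : g t * s ∈ S <;> simp [indicator, h])
  rw [← integral_add (hpart _ measurableSet_Iic) (hpart _ measurableSet_Ioi)]
  refine integral_congr_ae (ae_of_all _ fun s => ?_)
  simp only [← add_smul, ← mul_add, ← compl_Iic, indicator_self_add_compl_apply]

end Abelian

section LevyTail

/-- The tail `x ↦ ν((-∞, -x])` of the jump measure `ν`. -/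
noncomputable def levyTail (ν : Measure ℝ) (x : ℝ) : ℝ := ν.real (Iic (-x))

variable {ν : Measure ℝ} {E : Type*} [NormedAddCommGroup E] {f : ℝ → E} {M : ℝ}

lemma measure_Iic_neg_lt_top (hν : Integrable (fun z => min (z ^ 2) |z|) ν) {x : ℝ}
    (hx : 0 < x) : ν (Iic (-x)) < ⊤ := by
  have hpos : 0 < min (x ^ 2) x := by positivity
  refine (measure_mono fun z (hz : z ≤ -x) => ?_).trans_lt (hν.measure_ge_lt_top hpos)
  have habs : x ≤ |z| := (le_neg_of_le_neg hz).trans (neg_le_abs z)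
  exact min_le_min (sq_le_sq.2 (by rwa [abs_of_pos hx])) habs

lemma levyTail_nonneg (x : ℝ) : 0 ≤ levyTail ν x := measureReal_nonneg

lemma antitoneOn_levyTail (hν : Integrable (fun z => min (z ^ 2) |z|) ν) :
    AntitoneOn (levyTail ν) (Ioi 0) := fun _ hx _ _ hxy =>
  measureReal_mono (Iic_subset_Iic.2 (neg_le_neg hxy)) (measure_Iic_neg_lt_top hν hx).ne

lemma measurable_levyTail : Measurable (levyTail ν) :=
  Antitone.measurable (f := fun x => ν (Iic (-x)))
    (fun _ _ hxy => measure_mono (Iic_subset_Iic.2 (neg_le_neg hxy))) |>.ennreal_toReal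

lemma setIntegral_indicator_Iic_neg [NormedSpace ℝ E] {z : ℝ} (hz : z ≤ 0) (f : ℝ → E) :
    ∫ y in Ioi 0, (Iic (-z)).indicator f y = ∫ y in 0..-z, f y := by
  rw [setIntegral_indicator measurableSet_Iic, Ioi_inter_Iic,
    intervalIntegral.integral_of_le (by linarith)]

lemma setIntegral_indicator_Iic_neg_apply [NormedSpace ℝ E] [CompleteSpace E] {y : ℝ}
    (hy : 0 < y) (f : ℝ → E) :
    ∫ z in Iio 0, (Iic (-z)).indicator f y ∂ν = levyTail ν y • f y := by
  have hswap : ∀ z, (Iic (-z)).indicator f y = (Iic (-y)).indicator (fun _ => f y) z :=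
    fun z => by simp only [indicator, mem_Iic, le_neg]
  have hsub : Iio 0 ∩ Iic (-y) = Iic (-y) :=
    inter_eq_right.2 fun z (hz : z ≤ -y) => hz.trans_lt (neg_neg_of_pos hy)
  simp only [hswap]
  rw [setIntegral_indicator measurableSet_Iic, hsub, setIntegral_const, levyTail]

lemma setIntegral_indicator_Iic_neg_le {h : ℝ → ℝ}
    (hhM : ∀ y, 0 < y → ‖h y‖ ≤ M * min 1 y) {z : ℝ} (hz : z < 0) :
    ∫ y in Ioi 0, (Iic (-z)).indicator h y ≤ M * min (z ^ 2) |z| := by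
  have hM : 0 ≤ M := by simpa using (norm_nonneg _).trans (hhM 1 one_pos)
  have hbound := intervalIntegral.norm_integral_le_of_norm_le_const (a := 0) (b := -z)
    (f := h) (C := M * min 1 (-z)) fun y hy => by
      rw [uIoc_of_le (by linarith)] at hy
      exact (hhM y hy.1).trans (by gcongr; exact hy.2)
  rw [setIntegral_indicator_Iic_neg hz.le]
  refine (Real.le_norm_self _).trans (hbound.trans_eq ?_)
  rw [sub_zero, abs_neg, mul_assoc, min_mul_of_nonneg _ _ (abs_nonneg z), one_mul, ← abs_of_neg hz,
    ← pow_two, sq_abs, min_comm]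

lemma integrable_indicator_Iic_neg (hν : Integrable (fun z => min (z ^ 2) |z|) ν)
    (hf : Continuous f) (hfM : ∀ y, 0 < y → ‖f y‖ ≤ M * min 1 y) :
    Integrable (fun p : ℝ × ℝ => (Iic (-p.1)).indicator f p.2)
      ((ν.restrict (Iio 0)).prod (volume.restrict (Ioi 0))) := by
  have hmeas : StronglyMeasurable fun p : ℝ × ℝ => (Iic (-p.1)).indicator f p.2 :=
    (hf.comp continuous_snd).stronglyMeasurable.indicator
      (s := {p : ℝ × ℝ | p.2 ≤ -p.1}) (measurableSet_le measurable_snd measurable_fst.neg)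
  refine (integrable_prod_iff hmeas.aestronglyMeasurable).2 ⟨ae_of_all _ fun z => ?_, ?_⟩
  · change Integrable ((Iic (-z)).indicator f) _
    rw [integrable_indicator_iff measurableSet_Iic, IntegrableOn,
      Measure.restrict_restrict measurableSet_Iic, Iic_inter_Ioi]
    exact hf.integrableOn_Ioc
  · refine (hν.const_mul M).restrict.mono' hmeas.norm.aestronglyMeasurable.integral_prod_right' ?_
    filter_upwards [ae_restrict_mem measurableSet_Iio] with z hz
    simp only [norm_indicator_eq_indicator_norm]
    rw [Real.norm_of_nonneg
      (integral_nonneg fun y => indicator_nonneg (fun _ _ => norm_nonneg _) y)]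
    exact setIntegral_indicator_Iic_neg_le (fun y hy => (norm_norm (f y)).trans_le (hfM y hy)) hz

variable [NormedSpace ℝ E]

lemma integrableOn_intervalIntegral_neg (hν : Integrable (fun z => min (z ^ 2) |z|) ν)
    (hf : Continuous f) (hfM : ∀ y, 0 < y → ‖f y‖ ≤ M * min 1 y) :
    IntegrableOn (fun z => ∫ y in 0..-z, f y) (Iio 0) ν :=
  IntegrableOn.congr_fun (integrable_indicator_Iic_neg hν hf hfM).integral_prod_left
    (fun _ hz => setIntegral_indicator_Iic_neg (le_of_lt hz) f) measurableSet_Iio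

variable [CompleteSpace E] [SFinite ν]

lemma integrableOn_levyTail_smul (hν : Integrable (fun z => min (z ^ 2) |z|) ν)
    (hf : Continuous f) (hfM : ∀ y, 0 < y → ‖f y‖ ≤ M * min 1 y) :
    IntegrableOn (fun y => levyTail ν y • f y) (Ioi 0) :=
  IntegrableOn.congr_fun (integrable_indicator_Iic_neg hν hf hfM).integral_prod_right
    (fun _ hy => setIntegral_indicator_Iic_neg_apply hy f) measurableSet_Ioi

theorem setIntegral_intervalIntegral_neg (hν : Integrable (fun z => min (z ^ 2) |z|) ν)
    (hf : Continuous f) (hfM : ∀ y, 0 < y → ‖f y‖ ≤ M * min 1 y) :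
    ∫ z in Iio 0, (∫ y in 0..-z, f y) ∂ν = ∫ y in Ioi 0, levyTail ν y • f y := by
  rw [← setIntegral_congr_fun measurableSet_Iio
      fun z hz => setIntegral_indicator_Iic_neg (le_of_lt hz) f,
    ← setIntegral_congr_fun measurableSet_Ioi
      fun y hy => setIntegral_indicator_Iic_neg_apply hy f]
  exact integral_integral_swap (integrable_indicator_Iic_neg hν hf hfM)

lemma integrableOn_min_one_mul_levyTail (hν : Integrable (fun z => min (z ^ 2) |z|) ν) :
    IntegrableOn (fun y => min 1 y * levyTail ν y) (Ioi 0) := by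
  simpa only [smul_eq_mul, mul_comm] using
    integrableOn_levyTail_smul (M := 1) hν (continuous_const.min continuous_id')
      fun y hy => by rw [one_mul, Real.norm_of_nonneg (by positivity)]

end LevyTail

section CharExponent

variable {ν : Measure ℝ} {r : ℂ} {σ α : ℝ} {g : ℝ → ℝ}

lemma intervalIntegral_mul_one_sub_cexp_neg (r : ℂ) (z : ℝ) :
    ∫ y in 0..-z, r * (1 - Complex.exp (-r * y)) = Complex.exp (r * z) - 1 - r * z := by
  have hlin : ∀ y : ℝ, HasDerivAt (fun x : ℝ => -r * (x : ℂ)) (-r) y := fun y => by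
    simpa using (Complex.ofRealCLM.hasDerivAt (x := y)).const_mul (-r)
  have hderiv : ∀ y : ℝ, HasDerivAt (fun x : ℝ => Complex.exp (-r * x) - -r * x)
      (r * (1 - Complex.exp (-r * y))) y := fun y =>
    ((hlin y).cexp.sub (hlin y)).congr_deriv (by ring)
  rw [intervalIntegral.integral_eq_sub_of_hasDerivAt (fun y _ => hderiv y)
    ((by fun_prop : Continuous _).intervalIntegrable _ _), Complex.ofReal_neg, neg_mul_neg,
    Complex.ofReal_zero, mul_zero, Complex.exp_zero, sub_zero]
  ring

lemma norm_mul_one_sub_cexp_le (hr : 0 ≤ r.re) {y : ℝ} (hy : 0 < y) :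
    ‖r * (1 - Complex.exp (-r * y))‖ ≤ ‖r‖ * (‖r‖ + 2) * min 1 y := by
  rw [norm_mul, mul_assoc]
  gcongr
  exact norm_one_sub_cexp_neg_mul_le hr hy.le

lemma integrableOn_cexp_sub_one_sub (hν : Integrable (fun z => min (z ^ 2) |z|) ν)
    (hr : 0 ≤ r.re) :
    IntegrableOn (fun z : ℝ => Complex.exp (r * z) - 1 - r * z) (Iio 0) ν := by
  simpa only [intervalIntegral_mul_one_sub_cexp_neg] using
    integrableOn_intervalIntegral_neg hν (by fun_prop) fun y => norm_mul_one_sub_cexp_le hr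

variable [SFinite ν]

lemma setIntegral_cexp_sub_one_sub (hν : Integrable (fun z => min (z ^ 2) |z|) ν)
    (hr : 0 ≤ r.re) :
    ∫ z in Iio (0 : ℝ), (Complex.exp (r * z) - 1 - r * z) ∂ν =
      r * ∫ y in Ioi 0, levyTail ν y • (1 - Complex.exp (-r * y)) := by
  rw [← integral_const_mul]
  simpa only [intervalIntegral_mul_one_sub_cexp_neg, mul_smul_comm] using
    setIntegral_intervalIntegral_neg hν (by fun_prop) fun y => norm_mul_one_sub_cexp_le hr

lemma mul_charExponent_div (hν : Integrable (fun z => min (z ^ 2) |z|) ν) (σ t u : ℝ) {a : ℝ}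
    (ha : 0 < a) :
    t * charExponent σ ν (u / a) = ((t / a ^ 2 * (-(σ ^ 2 * u ^ 2) / 2) : ℝ) : ℂ) +
      Complex.I * u * ∫ s in Ioi 0, (t * levyTail ν (a * s)) •
        (1 - Complex.exp (-(Complex.I * u) * s)) := by
  have hscale := integral_comp_mul_left_Ioi (fun y => levyTail ν y •
    (1 - Complex.exp (-(Complex.I * (u / a : ℝ)) * y))) 0 ha
  rw [mul_zero, eq_inv_smul_iff₀ ha.ne'] at hscale
  have ha' : (a : ℂ) ≠ 0 := mod_cast ha.ne'
  have hcancel : ∀ s : ℝ, -(Complex.I * (u / a : ℝ)) * (a * s : ℝ) = -(Complex.I * u) * s :=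
    fun s => by push_cast; field_simp
  simp only [hcancel] at hscale
  rw [charExponent, setIntegral_cexp_sub_one_sub hν (by simp), ← hscale]
  simp only [mul_smul]
  rw [integral_smul]
  simp only [Complex.real_smul]
  push_cast
  field_simp

theorem tendsto_mul_charExponent_div (h1 : 1 < α) (h2 : α < 2)
    (hν : Integrable (fun z => min (z ^ 2) |z|) ν) (hRV : IsRegularlyVarying (levyTail ν) (-α))
    (hgtop : Tendsto g atTop atTop) (hg : Tendsto (fun t => t * levyTail ν (g t)) atTop (𝓝 1))
    {u : ℝ} (hu : u ≠ 0) :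
    Tendsto (fun t : ℝ => t * charExponent σ ν (u / g t)) atTop
      (𝓝 ((Real.Gamma (2 - α) / (α - 1) : ℝ) * (Complex.I * u) ^ (α : ℂ))) := by
  have hanti := antitoneOn_levyTail hν
  have hpos : ∀ x, 0 < x → 0 < levyTail ν x := fun _ => hRV.pos_of_antitoneOn levyTail_nonneg hanti
  have hr : 0 ≤ (Complex.I * u).re := by simp
  have hr0 : Complex.I * u ≠ 0 := by simpa using hu
  have hslit : Complex.I * u ∈ Complex.slitPlane := Complex.mem_slitPlane_iff.2 (by simpa using hu)
  have hjump := tendsto_setIntegral_tail_smul h1 h2 hRV measurable_levyTail hanti hpos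
    (integrableOn_min_one_mul_levyTail hν) hgtop hg
    (k := fun s : ℝ => 1 - Complex.exp (-(Complex.I * u) * s)) (by fun_prop)
    fun s hs => norm_one_sub_cexp_neg_mul_le hr hs.le
  have hgauss := Complex.continuous_ofReal.tendsto _ |>.comp
    ((tendsto_div_sq_of_tail_inverse hRV h2 hanti hpos hgtop hg).mul_const (-(σ ^ 2 * u ^ 2) / 2))
  rw [integral_rpow_neg_smul_one_sub_cexp h1 h2 hr hslit, Complex.cpow_sub _ _ hr0,
    Complex.cpow_one] at hjump
  have hlim := hgauss.add (hjump.const_mul (Complex.I * u))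
  rw [zero_mul, Complex.ofReal_zero, zero_add, mul_left_comm, mul_div_cancel₀ _ hr0] at hlim
  refine hlim.congr' ?_
  filter_upwards [hgtop.eventually_gt_atTop 0] with t hgt
  exact (mul_charExponent_div hν σ t u hgt).symm

lemma measurable_charExponent : Measurable (charExponent σ ν) := by
  have hint : StronglyMeasurable fun lam : ℝ => ∫ z in Iio (0 : ℝ),
      (Complex.exp (Complex.I * lam * z) - 1 - Complex.I * lam * z) ∂ν :=
    StronglyMeasurable.integral_prod_right (f := fun (lam z : ℝ) =>
      Complex.exp (Complex.I * lam * z) - 1 - Complex.I * lam * z)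
      (by fun_prop : Measurable _).stronglyMeasurable
  exact Measurable.add (by fun_prop) hint.measurable

end CharExponent

section TruncatedSecondMoment

/-- The second moment `∫_{(-x, 0)} z² ν(dz)` of the jumps of size less than `x`. -/
noncomputable def truncatedSecondMoment (ν : Measure ℝ) (x : ℝ) : ℝ :=
  ∫ z in Ioo (-x) 0, z ^ 2 ∂ν

variable {ν : Measure ℝ} {α β σ : ℝ}

lemma truncatedSecondMoment_nonneg (x : ℝ) : 0 ≤ truncatedSecondMoment ν x :=
  integral_nonneg fun z => sq_nonneg z

lemma integrableOn_sq_Ioo (hν : Integrable (fun z => min (z ^ 2) |z|) ν) (x : ℝ) :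
    IntegrableOn (fun z => z ^ 2) (Ioo (-x) 0) ν := by
  refine (hν.const_mul (max 1 x)).integrableOn.mono' (by fun_prop) ?_
  filter_upwards [ae_restrict_mem measurableSet_Ioo] with z hz
  have hzx : |z| ≤ x := by rw [abs_of_neg hz.2]; linarith [hz.1]
  rw [Real.norm_of_nonneg (sq_nonneg z), mul_min_of_nonneg _ _ (by positivity)]
  refine le_min (le_mul_of_one_le_left (sq_nonneg z) (le_max_left 1 x)) ?_
  rw [← sq_abs, pow_two]
  gcongr
  exact hzx.trans (le_max_right 1 x)

lemma monotone_truncatedSecondMoment (hν : Integrable (fun z => min (z ^ 2) |z|) ν) :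
    Monotone (truncatedSecondMoment ν) := fun _ y hxy =>
  setIntegral_mono_set (integrableOn_sq_Ioo hν y) (ae_of_all _ sq_nonneg)
    (Ioo_subset_Ioo_left (neg_le_neg hxy)).eventuallyLE

lemma sq_mul_levyTail_sub_le_truncatedSecondMoment
    (hν : Integrable (fun z => min (z ^ 2) |z|) ν) {x y : ℝ} (hx : 0 < x) (hxy : x ≤ y) :
    x ^ 2 * (levyTail ν x - levyTail ν y) ≤ truncatedSecondMoment ν y := by
  have hsub : Ioc (-y) (-x) ⊆ Ioo (-y) 0 := fun z hz => ⟨hz.1, hz.2.trans_lt (neg_neg_of_pos hx)⟩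
  have hfin : ν (Ioc (-y) (-x)) ≠ ⊤ :=
    ((measure_mono Ioc_subset_Iic_self).trans_lt (measure_Iic_neg_lt_top hν hx)).ne
  have hmeasure : ν.real (Ioc (-y) (-x)) = levyTail ν x - levyTail ν y := by
    rw [levyTail, levyTail, ← Iic_sdiff_Iic, measureReal_sdiff (Iic_subset_Iic.2 (neg_le_neg hxy))
      measurableSet_Iic (measure_Iic_neg_lt_top hν hx).ne]
  calc x ^ 2 * (levyTail ν x - levyTail ν y) = ∫ _ in Ioc (-y) (-x), x ^ 2 ∂ν := by
        rw [setIntegral_const, hmeasure, smul_eq_mul, mul_comm]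
    _ ≤ ∫ z in Ioc (-y) (-x), z ^ 2 ∂ν :=
      setIntegral_mono_on (integrableOn_const hfin) ((integrableOn_sq_Ioo hν y).mono_set hsub)
        measurableSet_Ioc fun z hz => by nlinarith [hz.2]
    _ ≤ truncatedSecondMoment ν y :=
      setIntegral_mono_set (integrableOn_sq_Ioo hν y) (ae_of_all _ sq_nonneg) hsub.eventuallyLE

lemma eventually_sq_mul_levyTail_le_truncatedSecondMoment (h1 : 1 < α)
    (hν : Integrable (fun z => min (z ^ 2) |z|) ν) (hRV : IsRegularlyVarying (levyTail ν) (-α)) :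
    ∀ᶠ y in atTop, y ^ 2 / 4 * levyTail ν y ≤ truncatedSecondMoment ν y := by
  have hpos : ∀ᶠ x in atTop, 0 < levyTail ν x := (eventually_gt_atTop 0).mono fun _ =>
    hRV.pos_of_antitoneOn levyTail_nonneg (antitoneOn_levyTail hν)
  have hdouble := hRV.eventually_doubling hpos (neg_lt_neg h1)
  filter_upwards [(tendsto_id.atTop_div_const two_pos).eventually hdouble, eventually_gt_atTop 0]
    with y hy hy0
  rw [id, mul_div_cancel₀ _ two_ne_zero, Real.rpow_neg_one] at hy
  calc y ^ 2 / 4 * levyTail ν y = (y / 2) ^ 2 * levyTail ν y := by ring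
    _ ≤ (y / 2) ^ 2 * (levyTail ν (y / 2) - levyTail ν y) := by gcongr; linarith
    _ ≤ truncatedSecondMoment ν y :=
      sq_mul_levyTail_sub_le_truncatedSecondMoment hν (by positivity) (by linarith)

lemma exists_mul_rpow_le_truncatedSecondMoment (hν : Integrable (fun z => min (z ^ 2) |z|) ν)
    (hsmall : (fun x => x ^ (2 - β)) =O[𝓝[>] 0] truncatedSecondMoment ν) {δ Y : ℝ}
    (hδβ : δ ≤ β) (hδ2 : δ ≤ 2) (hY : 0 < Y) :
    ∃ c > 0, ∀ x ∈ Ioc 0 Y, c * x ^ (2 - δ) ≤ truncatedSecondMoment ν x := by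
  obtain ⟨C, hC, hbound⟩ := hsmall.exists_pos
  obtain ⟨a, ha : 0 < a, hsub⟩ := mem_nhdsGT_iff_exists_Ioc_subset.1
    (hbound.bound.and (Ioc_mem_nhdsGT one_pos))
  have hnear : ∀ x ∈ Ioc 0 a, C⁻¹ * x ^ (2 - δ) ≤ truncatedSecondMoment ν x := fun x hx => by
    obtain ⟨hle, -, hx1⟩ := hsub hx
    rw [Real.norm_of_nonneg (Real.rpow_nonneg hx.1.le _),
      Real.norm_of_nonneg (truncatedSecondMoment_nonneg x)] at hle
    rw [inv_mul_le_iff₀ hC]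
    exact (Real.rpow_le_rpow_of_exponent_ge hx.1 hx1 (by linarith)).trans hle
  have hVa : 0 < truncatedSecondMoment ν a :=
    (by positivity : 0 < C⁻¹ * a ^ (2 - δ)).trans_le (hnear a ⟨ha, le_rfl⟩)
  refine ⟨min C⁻¹ (truncatedSecondMoment ν a / Y ^ (2 - δ)), by positivity, fun x hx => ?_⟩
  have hx0 := hx.1
  rcases le_total x a with hxa | hax
  · refine le_trans ?_ (hnear x ⟨hx0, hxa⟩)
    gcongr
    exact min_le_left _ _
  · refine le_trans ?_ (monotone_truncatedSecondMoment hν hax)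
    calc _ ≤ truncatedSecondMoment ν a / Y ^ (2 - δ) * Y ^ (2 - δ) := by
          gcongr
          · exact min_le_right _ _
          · exact hx.2
      _ = truncatedSecondMoment ν a := by field_simp

lemma re_cexp_sub_one_sub (lam z : ℝ) :
    (Complex.exp (Complex.I * lam * z) - 1 - Complex.I * lam * z).re =
      -(1 - Real.cos (lam * z)) := by
  rw [show Complex.I * lam * z = (lam * z : ℝ) * Complex.I by push_cast; ring, Complex.sub_re,
    Complex.sub_re, Complex.exp_ofReal_mul_I_re, Complex.re_ofReal_mul, Complex.I_re, mul_zero,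
    sub_zero, Complex.one_re, neg_sub]

lemma integrableOn_one_sub_cos (hν : Integrable (fun z => min (z ^ 2) |z|) ν) (lam : ℝ) :
    IntegrableOn (fun z => 1 - Real.cos (lam * z)) (Iio 0) ν := by
  have hre := (integrableOn_cexp_sub_one_sub hν (r := Complex.I * lam) (by simp)).re
  simp only [RCLike.re_eq_complex_re, re_cexp_sub_one_sub] at hre
  exact integrable_neg_iff.1 hre

lemma re_charExponent (hν : Integrable (fun z => min (z ^ 2) |z|) ν) (lam : ℝ) :
    (charExponent σ ν lam).re =
      -(σ ^ 2 * lam ^ 2) / 2 - ∫ z in Iio 0, (1 - Real.cos (lam * z)) ∂ν := by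
  have hre := integral_re (integrableOn_cexp_sub_one_sub hν (r := Complex.I * lam) (by simp))
  simp only [RCLike.re_eq_complex_re, re_cexp_sub_one_sub] at hre
  rw [charExponent, Complex.add_re, Complex.ofReal_re, ← hre, integral_neg, sub_eq_add_neg]

lemma re_charExponent_le (hν : Integrable (fun z => min (z ^ 2) |z|) ν) (lam : ℝ) :
    (charExponent σ ν lam).re ≤ -(2 / π ^ 2 * lam ^ 2 * truncatedSecondMoment ν |lam|⁻¹) := by
  have hcos : ∀ z ∈ Ioo (-|lam|⁻¹) 0, 2 / π ^ 2 * lam ^ 2 * z ^ 2 ≤ 1 - Real.cos (lam * z) :=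
    fun z hz => by
      have hz' : |z| ≤ |lam|⁻¹ := by rw [abs_of_neg hz.2]; linarith [hz.1]
      have hlz : |lam * z| ≤ 1 := by
        rw [abs_mul]
        exact (mul_le_mul_of_nonneg_left hz' (abs_nonneg lam)).trans (mul_inv_le_one)
      have := Real.cos_le_one_sub_mul_cos_sq (hlz.trans (by linarith [Real.pi_gt_three]))
      linarith
  have hint := integrableOn_one_sub_cos hν lam
  have hjump : 2 / π ^ 2 * lam ^ 2 * truncatedSecondMoment ν |lam|⁻¹ ≤
      ∫ z in Iio 0, (1 - Real.cos (lam * z)) ∂ν := by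
    rw [truncatedSecondMoment, ← integral_const_mul]
    exact (setIntegral_mono_on ((integrableOn_sq_Ioo hν _).const_mul _)
      (hint.mono_set fun z hz => hz.2) measurableSet_Ioo hcos).trans
      (setIntegral_mono_set hint (ae_of_all _ fun z => sub_nonneg.2 (Real.cos_le_one _))
        (LE.le.eventuallyLE fun z hz => hz.2))
  rw [re_charExponent hν]
  have hgauss : 0 ≤ σ ^ 2 * lam ^ 2 := by positivity
  linarith

end TruncatedSecondMoment

section Domination

variable {ν : Measure ℝ} {α β σ : ℝ} {g : ℝ → ℝ}

lemma exists_rpow_le_truncatedSecondMoment (h1 : 1 < α)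
    (hν : Integrable (fun z => min (z ^ 2) |z|) ν) (hRV : IsRegularlyVarying (levyTail ν) (-α))
    (hsmall : (fun x => x ^ (2 - β)) =O[𝓝[>] 0] truncatedSecondMoment ν)
    (hgtop : Tendsto g atTop atTop) (hg : Tendsto (fun t => t * levyTail ν (g t)) atTop (𝓝 1))
    {δ : ℝ} (hδβ : δ ≤ β) (hδ1 : δ ≤ 1) :
    ∃ c > 0, ∀ᶠ t in atTop, ∀ y ∈ Ioc 0 (g t),
      c * (g t / y) ^ δ ≤ t * (truncatedSecondMoment ν y / y ^ 2) := by
  have hanti := antitoneOn_levyTail hν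
  have hpos : ∀ x, 0 < x → 0 < levyTail ν x := fun _ => hRV.pos_of_antitoneOn levyTail_nonneg hanti
  have hδα : δ < α := hδ1.trans_lt h1
  obtain ⟨C, hC, hpotter⟩ := hRV.potter_upper hanti hpos hδα
  obtain ⟨Y, hY⟩ := eventually_atTop.1 ((hpotter.and
    (eventually_sq_mul_levyTail_le_truncatedSecondMoment h1 hν hRV)).and (eventually_gt_atTop 0))
  have hY0 : 0 < Y := (hY Y le_rfl).2
  obtain ⟨c₁, hc₁, hnear⟩ := exists_mul_rpow_le_truncatedSecondMoment hν hsmall hδβ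
    (hδ1.trans one_le_two) hY0
  obtain ⟨c₂, hc₂, hlower⟩ := eventually_mul_rpow_le_of_tail_inverse hRV hanti hpos hgtop hg hδα
  refine ⟨min (c₁ * c₂) (1 / (8 * C)), by positivity, ?_⟩
  filter_upwards [hlower, hg.eventually_const_lt one_half_lt_one, eventually_gt_atTop 0]
    with t ht htN ht0 y hy
  have hy0 := hy.1
  have hgt0 : 0 < g t := hy0.trans_le hy.2
  rcases le_total y Y with hyY | hYy
  · calc _ ≤ c₁ * c₂ * (g t / y) ^ δ := by gcongr; exact min_le_left _ _
      _ = c₂ * g t ^ δ * (c₁ * y ^ (2 - δ) / y ^ 2) := by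
        rw [Real.div_rpow hgt0.le hy0.le, Real.rpow_sub hy0, Real.rpow_two]; field_simp
      _ ≤ t * (truncatedSecondMoment ν y / y ^ 2) := by gcongr; exact hnear y ⟨hy0, hyY⟩
  · obtain ⟨⟨hup, hV⟩, -⟩ := hY y hYy
    have hhalf : 1 / 2 ≤ t * (C * (g t / y) ^ (-δ) * levyTail ν y) :=
      htN.le.trans (by gcongr; exact hup _ hy.2)
    calc _ ≤ 1 / (8 * C) * (g t / y) ^ δ := by gcongr; exact min_le_right _ _
      _ = 1 / 2 * ((g t / y) ^ δ / (4 * C)) := by ring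
      _ ≤ t * (C * (g t / y) ^ (-δ) * levyTail ν y) * ((g t / y) ^ δ / (4 * C)) := by gcongr
      _ = t * (y ^ 2 / 4 * levyTail ν y / y ^ 2) := by
        rw [Real.rpow_neg (by positivity)]; field_simp
      _ ≤ t * (truncatedSecondMoment ν y / y ^ 2) := by gcongr

lemma exists_mul_re_charExponent_div_le (h1 : 1 < α) (hβ : 0 < β) (σ : ℝ)
    (hν : Integrable (fun z => min (z ^ 2) |z|) ν) (hRV : IsRegularlyVarying (levyTail ν) (-α))
    (hsmall : (fun x => x ^ (2 - β)) =O[𝓝[>] 0] truncatedSecondMoment ν)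
    (hgtop : Tendsto g atTop atTop) (hg : Tendsto (fun t => t * levyTail ν (g t)) atTop (𝓝 1)) :
    ∃ c > 0, ∃ δ > (0 : ℝ), ∀ᶠ t in atTop, ∀ u : ℝ,
      t * (charExponent σ ν (u / g t)).re ≤ c - c * |u| ^ δ := by
  obtain ⟨c, hc, hbound⟩ := exists_rpow_le_truncatedSecondMoment h1 hν hRV hsmall hgtop hg
    (min_le_left β 1) (min_le_right β 1)
  refine ⟨2 / π ^ 2 * c, by positivity, min β 1, by positivity, ?_⟩
  filter_upwards [hbound, hgtop.eventually_gt_atTop 0, eventually_ge_atTop 0] with t ht hgt ht0 u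
  have hre := mul_le_mul_of_nonneg_left (re_charExponent_le (σ := σ) hν (u / g t)) ht0
  rw [abs_div, abs_of_pos hgt, inv_div] at hre
  have hV := truncatedSecondMoment_nonneg (ν := ν) (g t / |u|)
  rcases le_total |u| 1 with hu | hu
  · calc _ ≤ _ := hre
      _ ≤ 0 := by rw [mul_neg]; exact neg_nonpos.2 (by positivity)
      _ ≤ _ := sub_nonneg.2 (mul_le_of_le_one_right (by positivity)
        (Real.rpow_le_one (abs_nonneg u) hu (by positivity)))
  · have hu0 : 0 < |u| := one_pos.trans_le hu
    have h := ht (g t / |u|) ⟨div_pos hgt hu0, div_le_self hgt.le hu⟩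
    rw [div_div_cancel₀ hgt.ne'] at h
    calc _ ≤ _ := hre
      _ = -(2 / π ^ 2 * (t * (truncatedSecondMoment ν (g t / |u|) / (g t / |u|) ^ 2))) := by
        rw [← sq_abs (u / g t), abs_div, abs_of_pos hgt]; field_simp
      _ ≤ -(2 / π ^ 2 * (c * |u| ^ min β 1)) := by gcongr
      _ ≤ _ := by rw [← mul_assoc]; linarith [show 0 ≤ 2 / π ^ 2 * c by positivity]

lemma integrable_exp_sub_mul_abs_rpow (a : ℝ) {c δ : ℝ} (hc : 0 < c) (hδ : 0 < δ) :
    Integrable fun u : ℝ => Real.exp (a - c * |u| ^ δ) := by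
  have hIoi : IntegrableOn (fun s : ℝ => s ^ (1 - 1) • Real.exp (a - c * s ^ δ)) (Ioi 0) := by
    simpa [sub_eq_add_neg, Real.exp_add, IntegrableOn] using
      (integrableOn_exp_neg_mul_rpow hδ hc).const_mul (Real.exp a)
  exact (integrable_fun_norm_addHaar volume (E := ℝ)
    (f := fun s => Real.exp (a - c * s ^ δ))).2 (by simpa using hIoi)

end Domination

section LocalLimit

variable {ν : Measure ℝ} {α β σ : ℝ} {g : ℝ → ℝ}

lemma norm_cexp_ofReal_mul_le {t a : ℝ} {w : ℂ} (h : t * w.re ≤ a) :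
    ‖Complex.exp (t * w)‖ ≤ Real.exp a := by
  rwa [Complex.norm_exp, Complex.re_ofReal_mul, Real.exp_le_exp]

lemma norm_cexp_neg_I_mul (b x : ℝ) : ‖Complex.exp (-Complex.I * b * x)‖ = 1 := by
  rw [show -Complex.I * b * x = (-(b * x) : ℝ) * Complex.I by push_cast; ring]
  exact Complex.norm_exp_ofReal_mul_I _

lemma integrable_cexp_mul_charExponent [SFinite ν] {t r a c δ : ℝ} (hr : r ≠ 0) (hc : 0 < c)
    (hδ : 0 < δ) (hdom : ∀ u : ℝ, t * (charExponent σ ν (u / r)).re ≤ a - c * |u| ^ δ) :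
    Integrable fun lam : ℝ => Complex.exp (t * charExponent σ ν lam) := by
  have hmeas := measurable_charExponent (σ := σ) (ν := ν)
  rw [← integrable_comp_div_iff _ hr]
  exact (integrable_exp_sub_mul_abs_rpow a hc hδ).mono'
    (by fun_prop : Measurable _).aestronglyMeasurable
    (ae_of_all _ fun u => norm_cexp_ofReal_mul_le (hdom u))

lemma mul_fourierDensity_eq {r : ℝ} (hr : 0 < r) (t b : ℝ) :
    r * fourierDensity σ ν t b = (1 / (2 * π) : ℝ) * ∫ u : ℝ,
      Complex.exp (-Complex.I * b * (u / r : ℝ)) * Complex.exp (t * charExponent σ ν (u / r)) := by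
  rw [Measure.integral_comp_div (fun lam : ℝ => Complex.exp (-Complex.I * b * lam) *
    Complex.exp (t * charExponent σ ν lam)), fourierDensity, abs_of_pos hr, Complex.real_smul]
  ring

lemma tendsto_mul_fourierDensity [SFinite ν] {a c δ : ℝ} {φ : ℝ → ℂ} (hc : 0 < c) (hδ : 0 < δ)
    (hgtop : Tendsto g atTop atTop)
    (hdom : ∀ᶠ t in atTop, ∀ u : ℝ, t * (charExponent σ ν (u / g t)).re ≤ a - c * |u| ^ δ)
    (hlim : ∀ u ≠ 0, Tendsto (fun t : ℝ => t * charExponent σ ν (u / g t)) atTop (𝓝 (φ u)))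
    (b : ℝ) :
    Tendsto (fun t : ℝ => g t * fourierDensity σ ν t b) atTop
      (𝓝 ((1 / (2 * π) : ℝ) * ∫ u : ℝ, Complex.exp (φ u))) := by
  have hmeas := measurable_charExponent (σ := σ) (ν := ν)
  have hint : Tendsto (fun t : ℝ => ∫ u : ℝ, Complex.exp (-Complex.I * b * (u / g t : ℝ)) *
      Complex.exp (t * charExponent σ ν (u / g t))) atTop (𝓝 (∫ u : ℝ, Complex.exp (φ u))) := by
    refine tendsto_integral_filter_of_dominated_convergence _
      (.of_forall fun t => (by fun_prop : Measurable _).aestronglyMeasurable) ?_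
      (integrable_exp_sub_mul_abs_rpow a hc hδ) ?_
    · filter_upwards [hdom] with t ht
      refine ae_of_all _ fun u => ?_
      rw [norm_mul, norm_cexp_neg_I_mul, one_mul]
      exact norm_cexp_ofReal_mul_le (ht u)
    · filter_upwards [Measure.ae_ne volume 0] with u hu
      have hphase : Continuous fun x : ℝ => Complex.exp (-Complex.I * b * x) := by fun_prop
      simpa [Function.comp_def] using
        ((hphase.tendsto 0).comp (hgtop.const_div_atTop u)).mul (hlim u hu).cexp
  refine (hint.const_mul _).congr' ?_
  filter_upwards [hgtop.eventually_gt_atTop 0] with t hgt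
  exact (mul_fourierDensity_eq hgt t b).symm

lemma inv_two_pi_mul_integral_cexp_stable (h1 : 1 < α) (h2 : α < 2) :
    (1 / (2 * π) : ℝ) *
        ∫ u : ℝ, Complex.exp ((Real.Gamma (2 - α) / (α - 1) : ℝ) * (Complex.I * u) ^ (α : ℂ)) =
      (Real.Gamma (1 + 1 / α) / π * ((α - 1) / Real.Gamma (2 - α)) ^ (1 / α) *
        Real.sin (π / α) : ℝ) := by
  have hK : 0 < Real.Gamma (2 - α) / (α - 1) :=
    div_pos (Real.Gamma_pos_of_pos (by linarith)) (by linarith)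
  rw [integral_cexp_stable h1 h2 hK, ← Complex.ofReal_mul, neg_div, Real.rpow_neg hK.le,
    ← Real.inv_rpow hK.le, inv_div, add_comm (1 / α)]
  congr 1
  field_simp

end LocalLimit

section JumpConditions

variable {ν : Measure ℝ}

lemma integrable_min_sq_abs (hmin : ∫⁻ z, ENNReal.ofReal (min (z ^ 2) |z|) ∂ν ≠ ⊤) :
    Integrable (fun z => min (z ^ 2) |z|) ν := by
  refine ⟨by fun_prop, ?_⟩
  rw [hasFiniteIntegral_iff_ofReal (ae_of_all _ fun z => by positivity)]
  exact hmin.lt_top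

lemma toReal_lintegral_sq_eq_truncatedSecondMoment (x : ℝ) :
    (∫⁻ z in Ioo (-x) 0, ENNReal.ofReal (z ^ 2) ∂ν).toReal = truncatedSecondMoment ν x :=
  (integral_eq_lintegral_of_nonneg_ae (ae_of_all _ sq_nonneg) (by fun_prop)).symm

lemma rpow_isBigO_of_liminf_pos {f : ℝ → ℝ} {p : ℝ} (hf : ∀ x, 0 ≤ f x)
    (h : 0 < liminf (fun x => x ^ (-p) * f x) (𝓝[>] 0)) :
    (fun x => x ^ p) =O[𝓝[>] 0] f := by
  have hbdd : IsBoundedUnder (· ≥ ·) (𝓝[>] 0) fun x => x ^ (-p) * f x :=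
    isBoundedUnder_of_eventually_ge (a := 0) <| eventually_mem_nhdsWithin.mono fun x hx =>
      mul_nonneg (Real.rpow_nonneg (mem_Ioi.1 hx).le _) (hf x)
  obtain ⟨c, hc, hcl⟩ := exists_between h
  refine .of_bound c⁻¹ ?_
  filter_upwards [eventually_lt_of_lt_liminf hcl hbdd, self_mem_nhdsWithin] with x hx hx0
  have hxp : 0 < x ^ p := Real.rpow_pos_of_pos hx0 p
  rw [Real.rpow_neg (mem_Ioi.1 hx0).le, lt_inv_mul_iff₀ hxp] at hx
  rw [Real.norm_of_nonneg hxp.le, Real.norm_of_nonneg (hf x), le_inv_mul_iff₀ hc, mul_comm]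
  exact hx.le

end JumpConditions

theorem density_asymptotics_stable_general {α β : ℝ} (hα1 : 1 < α) (hα2 : α < 2) (hβ : 0 < β)
    (σ : ℝ) {ν : Measure ℝ} [SFinite ν] (hν : Integrable (fun z => min (z ^ 2) |z|) ν)
    (hRV : IsRegularlyVarying (levyTail ν) (-α))
    (hsmall : (fun x => x ^ (2 - β)) =O[𝓝[>] 0] truncatedSecondMoment ν)
    {g : ℝ → ℝ} (hgpos : ∀ᶠ t in atTop, 0 < g t)
    (hg : Tendsto (fun t => t * levyTail ν (g t)) atTop (𝓝 1)) (b : ℝ) :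
    (∀ᶠ t : ℝ in atTop, Integrable fun lam : ℝ => Complex.exp (t * charExponent σ ν lam)) ∧
      Tendsto (fun t : ℝ => g t * fourierDensity σ ν t b) atTop
        (𝓝 (Real.Gamma (1 + 1 / α) / π * ((α - 1) / Real.Gamma (2 - α)) ^ (1 / α) *
          Real.sin (π / α) : ℝ)) := by
  have hanti := antitoneOn_levyTail hν
  have hpos : ∀ x, 0 < x → 0 < levyTail ν x := fun _ => hRV.pos_of_antitoneOn levyTail_nonneg hanti
  have hgtop := tendsto_atTop_of_tail_inverse hanti hpos hgpos hg
  obtain ⟨c, hc, δ, hδ, hdom⟩ :=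
    exists_mul_re_charExponent_div_le hα1 hβ σ hν hRV hsmall hgtop hg
  constructor
  · filter_upwards [hdom, hgpos] with t ht hgt
    exact integrable_cexp_mul_charExponent hgt.ne' hc hδ ht
  · rw [← inv_two_pi_mul_integral_cexp_stable hα1 hα2]
    exact tendsto_mul_fourierDensity hc hδ hgtop hdom
      (fun _ hu => tendsto_mul_charExponent_div hα1 hα2 hν hRV hgtop hg hu) b

/-- Key asymptotic (4.3) in the proof of Theorem 2.1 of the paper: in the stable
regime the density of `X_t` at `b` satisfies
`g(t) p(t,b) → (Γ(1+1/α)/π) ((α-1)/Γ(2-α))^{1/α} sin(π/α)`. -/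
theorem density_asymptotics_stable (α β : ℝ) (hα1 : 1 < α) (hα2 : α < 2)
    (hβ1 : α ≤ β) (hβ2 : β < 2) (σ : ℝ) (hσ : 0 ≤ σ)
    (ν : MeasureTheory.Measure ℝ) [SigmaFinite ν]
    (hconc : ν (Ici (0 : ℝ)) = 0)
    (hmin : ∫⁻ z, ENNReal.ofReal (min (z ^ 2) |z|) ∂ν ≠ ⊤)
    (htail : ∀ᶠ x in atTop, 0 < ν (Iic (-x)) ∧ ν (Iic (-x)) < ⊤)
    (hRV : ∀ c : ℝ, 0 < c →
      Tendsto (fun x => (ν (Iic (-(c * x)))).toReal / (ν (Iic (-x))).toReal)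
        atTop (nhds (c ^ (-α))))
    (hliminf : 0 < Filter.liminf
      (fun x => x ^ (β - 2) * (∫⁻ z in Ioo (-x) (0 : ℝ), ENNReal.ofReal (z ^ 2) ∂ν).toReal)
      (nhdsWithin 0 (Ioi 0)))
    (g : ℝ → ℝ) (hgpos : ∀ x > 0, 0 < g x)
    (hgRV : ∀ c : ℝ, 0 < c →
      Tendsto (fun x => g (c * x) / g x) atTop (nhds (c ^ (1 / α))))
    (hg : Tendsto (fun x => x * (ν (Iic (-g x))).toReal) atTop (nhds 1))
    (b : ℝ) :
    (∀ᶠ t : ℝ in atTop, Integrable (fun lam : ℝ => Complex.exp ((t : ℂ) * charExponent σ ν lam))) ∧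
    Tendsto (fun t : ℝ => (g t : ℂ) * fourierDensity σ ν t b) atTop
      (nhds ((Real.Gamma (1 + 1 / α) / Real.pi *
          ((α - 1) / Real.Gamma (2 - α)) ^ (1 / α) * Real.sin (Real.pi / α) : ℝ) : ℂ)) := by
  simp only [toReal_lintegral_sq_eq_truncatedSecondMoment] at hliminf
  have hsmall : (fun x => x ^ (2 - β)) =O[𝓝[>] 0] truncatedSecondMoment ν :=
    rpow_isBigO_of_liminf_pos truncatedSecondMoment_nonneg (by simpa only [neg_sub] using hliminf)
  exact density_asymptotics_stable_general hα1 hα2 (by linarith) σ (integrable_min_sq_abs hmin)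
    hRV hsmall ((eventually_gt_atTop 0).mono hgpos) hg b
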